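/- arXiv:1501.06752 — 2 statements merged into one kernel-verified Lean document; each statement's English description precedes it below -/
import Mathlib

section
/- The number α₁₁ = √23 · ln((√23 − 1)/(√23 + 1)) has irrationality measure at most 5.08121; that is, for every real κ > 5.08121, there exist only finitely many pairs (p, q) with p ∈ ℤ and q a positive integer such that |α₁₁ − p/q| < q^(−κ). -/
/-!
For natural numbers `0 < 4 P < S`, integrate the Laurent polynomial `(√S - x - P / x) ^ (2 m) / x`
between the two roots of `x² - √S x + P`, whose sum is `√S` and whose product is `P`. A monomial
`x ^ (e - 1)` with `e ≠ 0` contributes a difference of `e`-th powers of the roots divided by `e`,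
and `1 / x` contributes the logarithm of the quotient of the roots. After scaling by
`√S / √(S - 4 P)` the integral is therefore a linear form in `1` and
`√D * log ((√D - 1) / (√D + 1))`, where `D = S / (S - 4 P)`, whose coefficients are integers once
multiplied by `lcm (1, …, 2 m)`.

On the interval the base `√S - x - P / x` has maximum `√S - 2 √P`, attained at `x = √P`, and the
coefficient of the logarithm is at most `(√S + 2 √P) ^ (2 m)`. Since `lcm (1, …, n) ≤ (e + ε) ^ n`
for large `n`, the linear forms decrease like `(e (√S - 2 √P)) ^ (2 m)`, while their ratio to the
leading coefficients stays above `((√S - 2 √P) / (√S + 2 √P)) ^ (2 m)` up to subexponential factors.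
If a form satisfies `2 q |a α - b| ≤ 1`, then `0` is an integer closest to `q (a α - b)`, and hence
`|a α - b| ≤ |a| |α - p / q|` for every `p`; the exponent comes from the first form that is this
small.

The bound on the least common multiple is the upper half of the prime number theorem, `ψ x ≤ c x`
for large `x` and every `c > 1`. It follows from the non-vanishing of `ζ` on `re s = 1` by the
Wiener-Ikehara method: averages of `exp (-u) ψ (exp u) - 1` against rescaled Fejér kernels tend to
`0` by the Riemann-Lebesgue lemma, and monotonicity of `ψ` turns averages into pointwise bounds.

The number `23` is `D` for `S = 46` and `P = 11`.
-/

open Filter Topology MeasureTheory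
open Finset.HasAntidiagonal (antidiagonal mem_antidiagonal)
open Set (Icc Ioc Ioi Ioo uIcc)

namespace IrrationalityMeasure

/-! ### Irrationality measures from linear forms -/

/-- The fractions `p / q` with `|α - p / q| < q ^ (-κ)`, as pairs `(p, q)` that need not be in
lowest terms; the irrationality measure of `α` is at most `c` when this set is finite for every
`κ > c`. -/
def goodApproximations (α κ : ℝ) : Set (ℤ × ℕ+) :=
  {pq | |α - (pq.1 : ℝ) / ((pq.2 : ℕ) : ℝ)| < ((pq.2 : ℕ) : ℝ) ^ (-κ)}

theorem abs_le_abs_sub_intCast {x : ℝ} (hx : 2 * |x| ≤ 1) (n : ℤ) : |x| ≤ |x - n| := by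
  rcases eq_or_ne n 0 with rfl | hn
  · simp
  · have hn_abs : (1 : ℝ) ≤ |(n : ℝ)| := by exact_mod_cast Int.one_le_abs hn
    have := abs_sub_abs_le_abs_sub (n : ℝ) x
    rw [abs_sub_comm] at this
    linarith

theorem abs_linearForm_le {α : ℝ} {a b : ℤ} {q : ℕ} (hq : 0 < q)
    (hsmall : 2 * q * |a * α - b| ≤ 1) (p : ℤ) :
    |a * α - b| ≤ |(a : ℝ)| * |α - p / q| := by
  have hq' : (0 : ℝ) < q := by exact_mod_cast hq
  have hclosest := abs_le_abs_sub_intCast (x := q * (a * α - b))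
    (by rwa [abs_mul, abs_of_pos hq', ← mul_assoc]) (a * p - b * q)
  have hdiff : q * (a * α - b) - ((a * p - b * q : ℤ) : ℝ) = q * (a * (α - p / q)) := by
    push_cast
    field_simp
    ring
  rw [hdiff, abs_mul, abs_mul, abs_mul, abs_of_pos hq'] at hclosest
  exact le_of_mul_le_mul_left hclosest hq'

theorem mul_rpow_le_abs_sub {α τ ω : ℝ} {a b : ℤ} {n q : ℕ} (hτ : 0 < τ) (hω : 0 ≤ ω)
    (hq : 0 < q) (hn_gt : Real.log (2 * q) / τ < n) (hn_le : n ≤ Real.log (2 * q) / τ + 1)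
    (ha : a ≠ 0) (hupper : |a * α - b| ≤ Real.exp (-τ) ^ n)
    (hlower : Real.exp (-ω) ^ n * |(a : ℝ)| ≤ |a * α - b|) (p : ℤ) :
    Real.exp (-ω * (Real.log 2 / τ + 1)) * (q : ℝ) ^ (-(ω / τ)) ≤ |α - p / q| := by
  have hq' : (0 : ℝ) < q := by exact_mod_cast hq
  have hsmall : 2 * q * |a * α - b| ≤ 1 := by
    calc 2 * q * |a * α - b| ≤ Real.exp (τ * n) * Real.exp (-τ) ^ n := by
          gcongr
          rw [← Real.exp_log (show (0 : ℝ) < 2 * q by linarith)]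
          rw [div_lt_iff₀' hτ] at hn_gt
          exact Real.exp_le_exp.2 hn_gt.le
      _ = 1 := by rw [← Real.exp_nat_mul, ← Real.exp_add]; simp [mul_comm]
  have hform := hlower.trans (abs_linearForm_le hq hsmall p)
  rw [mul_comm] at hform
  refine le_trans ?_ (le_of_mul_le_mul_left hform (by positivity))
  rw [← Real.exp_nat_mul, Real.rpow_def_of_pos hq', ← Real.exp_add]
  refine Real.exp_le_exp.2 ?_
  rw [Real.log_mul two_ne_zero hq'.ne'] at hn_le
  calc -ω * (Real.log 2 / τ + 1) + Real.log q * -(ω / τ)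
      = -ω * ((Real.log 2 + Real.log q) / τ + 1) := by ring
    _ ≤ -ω * n := mul_le_mul_of_nonpos_left hn_le (by linarith)
    _ = n * -ω := mul_comm _ _

theorem eventually_mul_rpow_le_abs_sub {α τ ω : ℝ} {a b : ℕ → ℤ} (hτ : 0 < τ) (hω : 0 ≤ ω)
    (ha : ∀ᶠ n in atTop, a n ≠ 0)
    (hupper : ∀ᶠ n in atTop, |a n * α - b n| ≤ Real.exp (-τ) ^ n)
    (hlower : ∀ᶠ n in atTop, Real.exp (-ω) ^ n * |(a n : ℝ)| ≤ |a n * α - b n|) :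
    ∀ᶠ q : ℕ in atTop, ∀ p : ℤ,
      Real.exp (-ω * (Real.log 2 / τ + 1)) * (q : ℝ) ^ (-(ω / τ)) ≤ |α - p / q| := by
  let index (q : ℕ) : ℕ := ⌊Real.log (2 * q) / τ⌋₊ + 1
  have hindex : Tendsto index atTop atTop := by
    refine (tendsto_add_atTop_nat 1).comp (tendsto_nat_floor_atTop.comp ?_)
    exact (Real.tendsto_log_atTop.comp
      (tendsto_natCast_atTop_atTop.const_mul_atTop two_pos)).atTop_div_const hτ
  filter_upwards [hindex.eventually (ha.and (hupper.and hlower)), eventually_ge_atTop 1]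
    with q ⟨hne, hup, hlow⟩ hq p
  have hq' : (1 : ℝ) ≤ q := by exact_mod_cast hq
  have hlog : 0 ≤ Real.log (2 * q) / τ := div_nonneg (Real.log_nonneg (by linarith)) hτ.le
  refine mul_rpow_le_abs_sub (n := index q) hτ hω hq ?_ ?_ hne hup hlow p
  · simpa [index] using Nat.lt_floor_add_one (Real.log (2 * q) / τ)
  · simpa [index] using Nat.floor_le hlog

theorem finite_goodApproximations_of_eventually {α κ : ℝ}
    (h : ∀ᶠ q : ℕ in atTop, ∀ p : ℤ, (q : ℝ) ^ (-κ) ≤ |α - p / q|) :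
    (goodApproximations α κ).Finite := by
  obtain ⟨Q, hQ⟩ := eventually_atTop.1 h
  refine Set.Finite.of_finite_fibers Prod.snd ?_ fun q _ ↦ ?_
  · refine (Set.finite_lt_nat Q).preimage (PNat.coe_injective.injOn) |>.subset ?_
    rintro _ ⟨⟨p, q⟩, hpq, rfl⟩
    by_contra hle
    exact absurd hpq (not_lt.2 (hQ q (not_lt.1 hle) p))
  · have hq : (0 : ℝ) < (q : ℕ) := by exact_mod_cast q.pos
    set R : ℝ := ((q : ℕ) : ℝ) ^ (-κ)
    refine ((Set.finite_Icc ⌊(q : ℕ) * (α - R)⌋ ⌈(q : ℕ) * (α + R)⌉).prod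
      (Set.finite_singleton q)).subset ?_
    rintro ⟨p, q'⟩ ⟨hpq, rfl : q' = q⟩
    obtain ⟨hlow, hhigh⟩ := abs_lt.1 (show |α - p / (q' : ℕ)| < R from hpq)
    have hp : (p : ℝ) = (q' : ℕ) * (p / (q' : ℕ)) := by field_simp
    refine ⟨⟨Int.floor_le_iff.2 ?_, Int.le_ceil_iff.2 ?_⟩, rfl⟩
    · have : (q' : ℕ) * (α - R) < (p : ℝ) := by rw [hp]; gcongr; linarith
      linarith
    · have : (p : ℝ) < (q' : ℕ) * (α + R) := by rw [hp]; gcongr; linarith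
      linarith

theorem finite_goodApproximations_of_linearForms {α κ ρ R : ℝ} {a b : ℕ → ℤ}
    (hρ : 0 < ρ) (hρ1 : ρ < 1) (hR : 0 < R) (hR1 : R ≤ 1)
    (ha : ∀ᶠ n in atTop, a n ≠ 0)
    (hupper : ∀ r > ρ, ∀ᶠ n in atTop, |a n * α - b n| ≤ r ^ n)
    (hlower : ∀ r > 0, r < R → ∀ᶠ n in atTop, r ^ n * |(a n : ℝ)| ≤ |a n * α - b n|)
    (hκ : Real.log R / Real.log ρ < κ) : (goodApproximations α κ).Finite := by
  have hlogρ : Real.log ρ < 0 := Real.log_neg hρ hρ1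
  have hlogR : Real.log R ≤ 0 := Real.log_nonpos hR.le hR1
  have hcont : Tendsto (fun ε ↦ (ε - Real.log R) / (-Real.log ρ - ε)) (𝓝[>] 0)
      (𝓝 (Real.log R / Real.log ρ)) := by
    have : ContinuousAt (fun ε ↦ (ε - Real.log R) / (-Real.log ρ - ε)) 0 :=
      ContinuousAt.div (by fun_prop) (by fun_prop) (by simpa using hlogρ.ne)
    simpa [neg_div_neg_eq] using this.tendsto.mono_left nhdsWithin_le_nhds
  obtain ⟨ε, hεκ, hε, hερ⟩ := ((hcont.eventually_lt_const hκ).and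
    (Ioo_mem_nhdsGT (neg_pos.2 hlogρ))).exists
  have hbound := eventually_mul_rpow_le_abs_sub (τ := -Real.log ρ - ε) (ω := ε - Real.log R)
    (by linarith) (by linarith) ha
    (hupper _ ((Real.log_lt_iff_lt_exp hρ).1 (by linarith)))
    (hlower _ (Real.exp_pos _) ((Real.lt_log_iff_exp_lt hR).1 (by linarith)))
  have hpow : Tendsto (fun q : ℕ ↦ (q : ℝ) ^
      (-(κ - (ε - Real.log R) / (-Real.log ρ - ε)))) atTop (𝓝 0) :=
    (tendsto_rpow_neg_atTop (sub_pos.2 hεκ)).comp tendsto_natCast_atTop_atTop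
  refine finite_goodApproximations_of_eventually ?_
  filter_upwards [hbound, hpow.eventually_le_const (Real.exp_pos _), eventually_ge_atTop 1]
    with q hq hsmall hq1 p
  refine le_trans ?_ (hq p)
  have hq0 : (0 : ℝ) < q := by exact_mod_cast hq1
  refine le_trans (le_of_eq ?_)
    (mul_le_mul_of_nonneg_right hsmall (Real.rpow_nonneg hq0.le _))
  rw [← Real.rpow_add hq0]
  congr 1
  ring

/-! ### The Fejér kernel -/

/-- The Fejér kernel, the Fourier transform of the triangle function `1 - |t|` on `[-1, 1]`, except
for the junk value `0` at `v = 0`. -/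
noncomputable def fejerKernel (v : ℝ) : ℝ := 2 * (1 - Real.cos v) / v ^ 2

/-- The integrand `(1 - |t|) * exp (i t v)` whose integral over `[-1, 1]` is the Fejér kernel. -/
noncomputable def fejerWeight (v t : ℝ) : ℂ := ((1 - |t| : ℝ) : ℂ) * Complex.exp (t * v * Complex.I)

theorem fejerKernel_nonneg (v : ℝ) : 0 ≤ fejerKernel v :=
  div_nonneg (mul_nonneg zero_le_two (sub_nonneg.2 (Real.cos_le_one v))) (sq_nonneg v)

theorem fejerKernel_le (v : ℝ) : fejerKernel v ≤ 5 * (1 + v ^ 2)⁻¹ := by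
  rcases eq_or_ne v 0 with rfl | hv
  · norm_num [fejerKernel]
  have hcos₁ := Real.one_sub_sq_div_two_le_cos (x := v)
  have hcos₂ := Real.neg_one_le_cos v
  rw [fejerKernel, ← div_eq_mul_inv, div_le_div_iff₀ (by positivity) (by positivity)]
  nlinarith

theorem measurable_fejerKernel : Measurable fejerKernel := by
  unfold fejerKernel
  fun_prop

theorem integrable_fejerKernel : Integrable fejerKernel :=
  (integrable_inv_one_add_sq.const_mul 5).mono' measurable_fejerKernel.aestronglyMeasurable
    (.of_forall fun v ↦ by
      rw [Real.norm_of_nonneg (fejerKernel_nonneg v)]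
      exact fejerKernel_le v)

theorem integrable_fejerKernel_comp {l : ℝ} (hl : l ≠ 0) (y : ℝ) :
    Integrable fun u ↦ fejerKernel (l * (y - u)) :=
  (integrable_fejerKernel.comp_mul_left' hl).comp_sub_left y

theorem integral_fejerKernel_pos : 0 < ∫ v, fejerKernel v := by
  rw [integral_pos_iff_support_of_nonneg fejerKernel_nonneg integrable_fejerKernel]
  refine lt_of_lt_of_le (by simp) (measure_mono (s := Ioo 0 1) fun v hv ↦ ?_)
  have hcos : Real.cos v < 1 := by
    simpa using Real.cos_lt_cos_of_nonneg_of_le_pi le_rfl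
      (by linarith [hv.2, Real.pi_gt_three]) hv.1
  have := hv.1
  exact (div_pos (by linarith) (by positivity) : 0 < fejerKernel v).ne'

theorem integral_one_sub_mul_cos {v : ℝ} (hv : v ≠ 0) :
    ∫ t in (0 : ℝ)..1, 2 * (1 - t) * Real.cos (t * v) = fejerKernel v := by
  have hderiv (t : ℝ) : HasDerivAt
      (fun t ↦ 2 * (1 - t) * Real.sin (t * v) / v - 2 * Real.cos (t * v) / v ^ 2)
      (2 * (1 - t) * Real.cos (t * v)) t := by
    have hlin := hasDerivAt_mul_const (x := t) v
    refine (((((hasDerivAt_id t).const_sub 1).const_mul 2).mul hlin.sin).div_const v |>.sub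
      ((hlin.cos.const_mul 2).div_const (v ^ 2))).congr_deriv ?_
    simp only [id]
    field_simp
    ring
  rw [intervalIntegral.integral_eq_sub_of_hasDerivAt (fun t _ ↦ hderiv t)
    (Continuous.intervalIntegrable (by fun_prop) _ _), fejerKernel]
  simp
  ring

theorem continuous_fejerWeight (v : ℝ) : Continuous (fejerWeight v) := by
  unfold fejerWeight
  fun_prop

theorem fejerWeight_neg_add_fejerWeight {t : ℝ} (ht : 0 ≤ t) (v : ℝ) :
    fejerWeight v (-t) + fejerWeight v t = ((2 * (1 - t) * Real.cos (t * v) : ℝ) : ℂ) := by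
  have hcos := Complex.two_cos (t * v)
  simp only [fejerWeight, abs_neg, abs_of_nonneg ht]
  push_cast
  simp only [neg_mul] at hcos ⊢
  linear_combination -(1 - (t : ℂ)) * hcos

theorem integral_fejerWeight {v : ℝ} (hv : v ≠ 0) :
    ∫ t in Ioc (-1 : ℝ) 1, fejerWeight v t = fejerKernel v := by
  have hint (a b : ℝ) : IntervalIntegrable (fejerWeight v) volume a b :=
    (continuous_fejerWeight v).intervalIntegrable a b
  have hint_neg : IntervalIntegrable (fun t ↦ fejerWeight v (-t)) volume 0 1 :=
    ((continuous_fejerWeight v).comp continuous_neg).intervalIntegrable 0 1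
  have hreflect := intervalIntegral.integral_comp_neg (a := 0) (b := 1) (fejerWeight v)
  rw [neg_zero] at hreflect
  have hpair : ∀ t ∈ uIcc (0 : ℝ) 1, fejerWeight v (-t) + fejerWeight v t =
      ((2 * (1 - t) * Real.cos (t * v) : ℝ) : ℂ) := fun t ht ↦ by
    rw [Set.uIcc_of_le zero_le_one] at ht
    exact fejerWeight_neg_add_fejerWeight ht.1 v
  rw [← intervalIntegral.integral_of_le (by norm_num),
    ← intervalIntegral.integral_add_adjacent_intervals (hint (-1) 0) (hint 0 1), ← hreflect,
    ← intervalIntegral.integral_add hint_neg (hint 0 1), intervalIntegral.integral_congr hpair,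
    intervalIntegral.integral_ofReal, integral_one_sub_mul_cos hv]

theorem norm_fejerWeight_le_one (v : ℝ) {t : ℝ} (ht : t ∈ Ioc (-1 : ℝ) 1) :
    ‖fejerWeight v t‖ ≤ 1 := by
  have habs : |t| ≤ 1 := abs_le.2 ⟨ht.1.le, ht.2⟩
  rw [fejerWeight, norm_mul, Complex.norm_real, ← Complex.ofReal_mul, Complex.norm_exp_ofReal_mul_I,
    mul_one, Real.norm_of_nonneg (sub_nonneg.2 habs)]
  linarith [abs_nonneg t]

theorem fejerWeight_mul_exp (l y t u : ℝ) (z : ℂ) :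
    fejerWeight (l * y) t * Complex.exp (-(z + l * t * Complex.I) * u) =
      fejerWeight (l * (y - u)) t * Complex.exp (-z * u) := by
  rw [fejerWeight, fejerWeight, mul_assoc _ (Complex.exp _), mul_assoc _ (Complex.exp _),
    ← Complex.exp_add, ← Complex.exp_add]
  push_cast
  ring_nf

theorem integrableOn_exp_neg_mul {z : ℂ} (hz : 0 < z.re) :
    IntegrableOn (fun u : ℝ ↦ Complex.exp (-z * u)) (Ioi 0) :=
  integrableOn_exp_mul_complex_Ioi (by simpa using hz) 0

/-! ### A Tauberian theorem -/

section Laplace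

variable {h : ℝ → ℂ} {g : ℂ → ℂ} {C l : ℝ}

theorem integrable_fejerWeight_mul_exp (hm : Measurable h) (hC : ∀ u, ‖h u‖ ≤ C)
    (l y : ℝ) {σ : ℝ} (hσ : 0 < σ) :
    Integrable (fun p : ℝ × ℝ ↦ fejerWeight (l * (y - p.2)) p.1 * h p.2 * Complex.exp (-σ * p.2))
      ((volume.restrict (Ioc (-1 : ℝ) 1)).prod (volume.restrict (Ioi (0 : ℝ)))) := by
  have hexp : Integrable (fun p : ℝ × ℝ ↦ (1 : ℂ) * Complex.exp (-(σ : ℂ) * p.2))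
      ((volume.restrict (Ioc (-1 : ℝ) 1)).prod (volume.restrict (Ioi (0 : ℝ)))) :=
    Integrable.mul_prod (f := fun _ ↦ (1 : ℂ)) (integrable_const _)
      (integrableOn_exp_neg_mul (by simpa using hσ))
  simp only [one_mul] at hexp
  have hweight : Measurable fun p : ℝ × ℝ ↦ fejerWeight (l * (y - p.2)) p.1 := by
    unfold fejerWeight
    exact Continuous.measurable (by fun_prop)
  have hmeas : Measurable fun p : ℝ × ℝ ↦ fejerWeight (l * (y - p.2)) p.1 * h p.2 :=
    hweight.mul (hm.comp measurable_snd)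
  refine hexp.bdd_mul (c := C) hmeas.aestronglyMeasurable ?_
  rw [Measure.prod_restrict]
  refine (ae_restrict_iff' (measurableSet_Ioc.prod measurableSet_Ioi)).2 (.of_forall fun p hp ↦ ?_)
  rw [norm_mul]
  exact (mul_le_of_le_one_left (norm_nonneg _) (norm_fejerWeight_le_one _ hp.1)).trans (hC _)

theorem integral_fejerWeight_mul_laplace (hm : Measurable h) (hC : ∀ u, ‖h u‖ ≤ C)
    (hlap : ∀ z : ℂ, 0 < z.re → ∫ u in Ioi (0 : ℝ), h u * Complex.exp (-z * u) = g z)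
    (hl : l ≠ 0) (y : ℝ) {σ : ℝ} (hσ : 0 < σ) :
    ∫ t in Ioc (-1 : ℝ) 1, fejerWeight (l * y) t * g (σ + l * t * Complex.I) =
      ∫ u in Ioi (0 : ℝ), h u * Complex.exp (-σ * u) * fejerKernel (l * (y - u)) := by
  have hinner (t : ℝ) : fejerWeight (l * y) t * g (σ + l * t * Complex.I) =
      ∫ u in Ioi (0 : ℝ), fejerWeight (l * (y - u)) t * h u * Complex.exp (-σ * u) := by
    rw [← hlap _ (by simpa using hσ), ← integral_const_mul]
    congr 1 with u
    rw [mul_left_comm, fejerWeight_mul_exp]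
    ring
  have hne : ∀ᵐ u ∂volume.restrict (Ioi (0 : ℝ)), u ≠ y :=
    ae_restrict_of_ae (by simp [ae_iff])
  simp only [hinner]
  rw [integral_integral_swap (integrable_fejerWeight_mul_exp hm hC l y hσ)]
  refine integral_congr_ae ?_
  filter_upwards [hne] with u hu
  rw [← integral_fejerWeight (mul_ne_zero hl (sub_ne_zero.2 hu.symm)), ← integral_const_mul]
  congr 1 with t
  ring

theorem tendsto_integral_fejerWeight_mul (hg : ContinuousOn g {z | 0 ≤ z.re}) (l v : ℝ) :
    Tendsto (fun σ : ℝ ↦ ∫ t in Ioc (-1 : ℝ) 1, fejerWeight v t * g (σ + l * t * Complex.I))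
      (𝓝[>] 0) (𝓝 (∫ t in Ioc (-1 : ℝ) 1, fejerWeight v t * g (l * t * Complex.I))) := by
  have hmaps : Set.MapsTo (fun p : ℝ × ℝ ↦ (p.1 + l * p.2 * Complex.I : ℂ))
      (Icc 0 1 ×ˢ Icc (-1) 1) {z | 0 ≤ z.re} := fun p hp ↦ by simpa using hp.1.1
  have hcont : ContinuousOn (fun p : ℝ × ℝ ↦ g (p.1 + l * p.2 * Complex.I))
      (Icc 0 1 ×ˢ Icc (-1) 1) := hg.comp (by fun_prop) hmaps
  have hnear : ∀ᶠ σ : ℝ in 𝓝[>] 0, σ ∈ Ioc (0 : ℝ) 1 := Ioc_mem_nhdsGT one_pos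
  obtain ⟨B, hB⟩ := (isCompact_Icc.prod isCompact_Icc).exists_bound_of_continuousOn hcont
  refine tendsto_integral_filter_of_dominated_convergence (fun _ ↦ B) ?_ ?_
    (integrable_const _) (.of_forall fun t ↦ Tendsto.const_mul _ ?_)
  · filter_upwards [hnear] with σ hσ
    refine ((continuous_fejerWeight v).continuousOn.mul
      (hg.comp (by fun_prop) fun t _ ↦ ?_)).aestronglyMeasurable measurableSet_Ioc
    simpa using hσ.1.le
  · filter_upwards [hnear] with σ hσ
    refine (ae_restrict_iff' measurableSet_Ioc).2 (.of_forall fun t ht ↦ ?_)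
    rw [norm_mul]
    exact (mul_le_of_le_one_left (norm_nonneg _) (norm_fejerWeight_le_one v ht)).trans
      (hB (σ, t) ⟨⟨hσ.1.le, hσ.2⟩, ht.1.le, ht.2⟩)
  · have hpath : Tendsto (fun σ : ℝ ↦ (σ + l * t * Complex.I : ℂ)) (𝓝[>] 0)
        (𝓝 (l * t * Complex.I)) := by
      have : Continuous fun σ : ℝ ↦ (σ + l * t * Complex.I : ℂ) := by fun_prop
      simpa using (this.tendsto 0).mono_left nhdsWithin_le_nhds
    refine (hg (l * t * Complex.I) (by simp)).tendsto.comp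
      (tendsto_nhdsWithin_iff.2 ⟨hpath, ?_⟩)
    filter_upwards [hnear] with σ hσ
    simpa using hσ.1.le

theorem tendsto_integral_exp_mul_fejerKernel (hm : Measurable h) (hC : ∀ u, ‖h u‖ ≤ C)
    (hl : l ≠ 0) (y : ℝ) :
    Tendsto (fun σ : ℝ ↦
        ∫ u in Ioi (0 : ℝ), h u * Complex.exp (-σ * u) * fejerKernel (l * (y - u)))
      (𝓝[>] 0) (𝓝 (∫ u in Ioi (0 : ℝ), h u * fejerKernel (l * (y - u)))) := by
  have hkernel : Measurable fun u ↦ (fejerKernel (l * (y - u)) : ℂ) :=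
    Complex.measurable_ofReal.comp (measurable_fejerKernel.comp (by fun_prop))
  refine tendsto_integral_filter_of_dominated_convergence (fun u ↦ C * fejerKernel (l * (y - u)))
    (.of_forall fun σ ↦ ((hm.mul (by fun_prop)).mul hkernel).aestronglyMeasurable) ?_
    ((integrable_fejerKernel_comp hl y).const_mul C).integrableOn
    (.of_forall fun u ↦ Tendsto.mul_const _ ?_)
  · filter_upwards [self_mem_nhdsWithin] with σ (hσ : 0 < σ)
    refine (ae_restrict_iff' measurableSet_Ioi).2 (.of_forall fun u (hu : 0 < u) ↦ ?_)
    rw [norm_mul, norm_mul, Complex.norm_real, Real.norm_of_nonneg (fejerKernel_nonneg _)]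
    have hexp : ‖Complex.exp (-σ * u)‖ ≤ 1 := by
      rw [Complex.norm_exp]
      simpa using (mul_pos hσ hu).le
    gcongr
    · exact fejerKernel_nonneg _
    · exact (mul_le_of_le_one_right (norm_nonneg _) hexp).trans (hC u)
  · have : Continuous fun σ : ℝ ↦ h u * Complex.exp (-σ * u) := by fun_prop
    simpa using (this.tendsto 0).mono_left nhdsWithin_le_nhds

theorem tendsto_integral_mul_fejerKernel (hm : Measurable h) (hC : ∀ u, ‖h u‖ ≤ C)
    (hg : ContinuousOn g {z | 0 ≤ z.re})
    (hlap : ∀ z : ℂ, 0 < z.re → ∫ u in Ioi (0 : ℝ), h u * Complex.exp (-z * u) = g z)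
    (hl : 0 < l) :
    Tendsto (fun y ↦ ∫ u in Ioi (0 : ℝ), h u * fejerKernel (l * (y - u))) atTop (𝓝 0) := by
  have hboundary (y : ℝ) : ∫ t in Ioc (-1 : ℝ) 1, fejerWeight (l * y) t * g (l * t * Complex.I) =
      ∫ u in Ioi (0 : ℝ), h u * fejerKernel (l * (y - u)) :=
    tendsto_nhds_unique (tendsto_integral_fejerWeight_mul hg l (l * y))
      ((tendsto_integral_exp_mul_fejerKernel hm hC hl.ne' y).congr' (by
        filter_upwards [self_mem_nhdsWithin] with σ hσ
        exact (integral_fejerWeight_mul_laplace hm hC hlap hl.ne' y hσ).symm))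
  have hfreq : Tendsto (fun y : ℝ ↦ -(l / (2 * Real.pi)) * y) atTop (cocompact ℝ) :=
    (tendsto_id.const_mul_atTop_of_neg (neg_lt_zero.2 (by positivity))).mono_right
      atBot_le_cocompact
  refine ((Real.tendsto_integral_exp_smul_cocompact ((Ioc (-1 : ℝ) 1).indicator
    fun t ↦ ((1 - |t| : ℝ) : ℂ) * g (l * t * Complex.I))).comp hfreq).congr fun y ↦ ?_
  rw [← hboundary, ← integral_indicator measurableSet_Ioc]
  refine integral_congr_ae (.of_forall fun t ↦ ?_)
  by_cases ht : t ∈ Ioc (-1 : ℝ) 1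
  · have hchar : 2 * Real.pi * (-(t * (-(l / (2 * Real.pi)) * y))) = t * (l * y) := by
      field_simp
    simp only [Set.indicator_of_mem ht, Circle.smul_def, Real.fourierChar_apply, hchar, fejerWeight,
      smul_eq_mul]
    push_cast
    ring
  · simp [Set.indicator_of_notMem ht]

end Laplace

section Tauberian

variable {H : ℝ → ℝ} {g : ℂ → ℂ} {C l : ℝ}

theorem integrable_mul_fejerKernel (hm : Measurable H) (hC : ∀ u, ‖H u‖ ≤ C) (hl : l ≠ 0) (y : ℝ) :
    Integrable fun u ↦ H u * fejerKernel (l * (y - u)) :=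
  (integrable_fejerKernel_comp hl y).bdd_mul hm.aestronglyMeasurable (.of_forall hC)

theorem integral_fejerKernel_comp (hl : 0 < l) (y : ℝ) :
    l * ∫ u, fejerKernel (l * (y - u)) = ∫ v, fejerKernel v := by
  rw [integral_sub_left_eq_self (fun u ↦ fejerKernel (l * u)) volume y,
    Measure.integral_comp_mul_left, abs_of_pos (inv_pos.2 hl), smul_eq_mul,
    mul_inv_cancel_left₀ hl.ne']

theorem eventually_mul_integral_mul_fejerKernel_lt (hm : Measurable H) (hC : ∀ u, ‖H u‖ ≤ C)
    (hg : ContinuousOn g {z | 0 ≤ z.re})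
    (hlap : ∀ z : ℂ, 0 < z.re →
      ∫ u in Ioi (0 : ℝ), ((H u - 1 : ℝ) : ℂ) * Complex.exp (-z * u) = g z)
    (hl : 0 < l) {M : ℝ} (hM : ∫ v, fejerKernel v < M) :
    ∀ᶠ y in atTop, l * ∫ u in Ioi (0 : ℝ), H u * fejerKernel (l * (y - u)) < M := by
  have hlim := (Complex.continuous_re.tendsto 0).comp <| tendsto_integral_mul_fejerKernel
    (Complex.measurable_ofReal.comp (hm.sub_const 1)) (C := C + 1) (fun u ↦ by
      rw [Function.comp_apply, Complex.norm_real]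
      exact (norm_sub_le _ _).trans (by simpa using hC u)) hg hlap hl
  have hsmall := (hlim.const_mul l).eventually_lt_const (u := M - ∫ v, fejerKernel v)
    (by simpa using hM)
  filter_upwards [hsmall] with y hy
  have hreal : (∫ u in Ioi (0 : ℝ), (((H u - 1 : ℝ) : ℂ) * fejerKernel (l * (y - u)))).re =
      (∫ u in Ioi (0 : ℝ), H u * fejerKernel (l * (y - u))) -
        ∫ u in Ioi (0 : ℝ), fejerKernel (l * (y - u)) := by
    rw [← integral_sub (integrable_mul_fejerKernel hm hC hl.ne' y).integrableOn
      (integrable_fejerKernel_comp hl.ne' y).integrableOn]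
    simp only [← Complex.ofReal_mul, integral_complex_ofReal, Complex.ofReal_re, sub_mul, one_mul]
  have hhalf : ∫ u in Ioi (0 : ℝ), fejerKernel (l * (y - u)) ≤ ∫ u, fejerKernel (l * (y - u)) :=
    setIntegral_le_integral (integrable_fejerKernel_comp hl.ne' y)
      (.of_forall fun _ ↦ fejerKernel_nonneg _)
  have htotal := integral_fejerKernel_comp hl y
  simp only [Function.comp_apply] at hy
  rw [hreal, mul_sub] at hy
  linarith [mul_le_mul_of_nonneg_left hhalf hl.le]

theorem mul_exp_neg_le_of_monotone (hH : ∀ u, 0 ≤ H u)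
    (hmono : Monotone fun u ↦ Real.exp u * H u) {d y u : ℝ} (hyu : y ≤ u) (hud : u ≤ y + d) :
    H y * Real.exp (-d) ≤ H u := by
  have hexp : Real.exp u * Real.exp (-d) ≤ Real.exp y := by
    rw [← Real.exp_add]
    exact Real.exp_le_exp.2 (by linarith)
  refine le_of_mul_le_mul_left ?_ (Real.exp_pos u)
  calc Real.exp u * (H y * Real.exp (-d))
      = Real.exp u * Real.exp (-d) * H y := by ring
    _ ≤ Real.exp y * H y := mul_le_mul_of_nonneg_right hexp (hH y)
    _ ≤ Real.exp u * H u := hmono hyu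

theorem mul_setIntegral_Ioc_fejerKernel_comp (hl : l ≠ 0) {d : ℝ} (hd : 0 ≤ d) (y : ℝ) :
    l * ∫ u in Ioc y (y + 2 * d), fejerKernel (l * (y + d - u)) =
      ∫ v in (-(l * d))..(l * d), fejerKernel v := by
  have hsubst := intervalIntegral.integral_comp_sub_mul (a := y) (b := y + 2 * d) fejerKernel hl
    (l * (y + d))
  simp only [← mul_sub] at hsubst
  rw [← intervalIntegral.integral_of_le (by linarith), hsubst, smul_eq_mul, mul_inv_cancel_left₀ hl]
  congr 1 <;> ring

theorem mul_integral_fejerKernel_le (hm : Measurable H) (hC : ∀ u, ‖H u‖ ≤ C) (hH : ∀ u, 0 ≤ H u)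
    (hmono : Monotone fun u ↦ Real.exp u * H u) (hl : 0 < l) {d y : ℝ} (hd : 0 ≤ d) (hy : 0 ≤ y) :
    H y * Real.exp (-(2 * d)) * ∫ v in (-(l * d))..(l * d), fejerKernel v ≤
      l * ∫ u in Ioi (0 : ℝ), H u * fejerKernel (l * (y + d - u)) := by
  have hint := integrable_mul_fejerKernel hm hC hl.ne' (y + d)
  rw [← mul_setIntegral_Ioc_fejerKernel_comp hl.ne' hd y, mul_left_comm, ← integral_const_mul]
  refine mul_le_mul_of_nonneg_left ?_ hl.le
  calc ∫ u in Ioc y (y + 2 * d), H y * Real.exp (-(2 * d)) * fejerKernel (l * (y + d - u))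
      ≤ ∫ u in Ioc y (y + 2 * d), H u * fejerKernel (l * (y + d - u)) :=
        setIntegral_mono_on ((integrable_fejerKernel_comp hl.ne' _).const_mul _).integrableOn
          hint.integrableOn measurableSet_Ioc fun u hu ↦ mul_le_mul_of_nonneg_right
            (mul_exp_neg_le_of_monotone hH hmono hu.1.le hu.2) (fejerKernel_nonneg _)
    _ ≤ ∫ u in Ioi (0 : ℝ), H u * fejerKernel (l * (y + d - u)) :=
        setIntegral_mono_set hint.integrableOn
          (.of_forall fun u ↦ mul_nonneg (hH u) (fejerKernel_nonneg _))
          (LE.le.eventuallyLE fun u hu ↦ hy.trans_lt hu.1)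

theorem eventually_lt_of_continuousOn_laplace (hm : Measurable H) (hC : ∀ u, ‖H u‖ ≤ C)
    (hH : ∀ u, 0 ≤ H u) (hmono : Monotone fun u ↦ Real.exp u * H u)
    (hg : ContinuousOn g {z | 0 ≤ z.re})
    (hlap : ∀ z : ℂ, 0 < z.re →
      ∫ u in Ioi (0 : ℝ), ((H u - 1 : ℝ) : ℂ) * Complex.exp (-z * u) = g z)
    {c : ℝ} (hc : 1 < c) :
    ∀ᶠ y in atTop, H y < c := by
  have hS := integral_fejerKernel_pos
  set S := ∫ v, fejerKernel v
  obtain ⟨d, hd, hdc⟩ : ∃ d : ℝ, 0 < d ∧ Real.exp (4 * d) = c :=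
    ⟨Real.log c / 4, div_pos (Real.log_pos hc) four_pos, by
      rw [mul_div_cancel₀ _ four_ne_zero, Real.exp_log (by linarith)]⟩
  have hmass : Tendsto (fun l : ℝ ↦ ∫ v in (-(l * d))..(l * d), fejerKernel v) atTop (𝓝 S) :=
    have hld : Tendsto (fun l : ℝ ↦ l * d) atTop atTop := tendsto_id.atTop_mul_const hd
    intervalIntegral_tendsto_integral integrable_fejerKernel (tendsto_neg_atTop_atBot.comp hld) hld
  obtain ⟨l, hl_mass, hl⟩ := ((hmass.eventually_const_lt (u := S * Real.exp (-d))
    (mul_lt_of_lt_one_right hS (by simpa using hd))).and (eventually_gt_atTop 0)).exists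
  have hupper := eventually_mul_integral_mul_fejerKernel_lt hm hC hg hlap hl (M := S * Real.exp d)
    (lt_mul_of_one_lt_right hS (by simpa using hd))
  filter_upwards [(tendsto_atTop_add_const_right _ d tendsto_id).eventually hupper,
    eventually_gt_atTop 0] with y hy_upper hy
  have hlower := mul_integral_fejerKernel_le hm hC hH hmono hl hd.le hy.le
  have hchain : H y * Real.exp (-(2 * d)) * (S * Real.exp (-d)) < S * Real.exp d :=
    (mul_le_mul_of_nonneg_left hl_mass.le (mul_nonneg (hH y) (Real.exp_pos _).le)).trans_lt
      (hlower.trans_lt hy_upper)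
  have hsplit : H y * (S * Real.exp (-(3 * d))) < Real.exp (4 * d) * (S * Real.exp (-(3 * d))) := by
    convert hchain using 1
    · rw [show -(3 * d) = -(2 * d) + -d by ring, Real.exp_add]
      ring
    · rw [mul_left_comm, ← Real.exp_add]
      ring_nf
  exact hdc ▸ lt_of_mul_lt_mul_right hsplit (by positivity)

end Tauberian

/-! ### The upper half of the prime number theorem -/

/-- The Chebyshev function in logarithmic scale, `ψ (exp u) / exp u`. -/
noncomputable def normalizedPsi (u : ℝ) : ℝ := Real.exp (-u) * Chebyshev.psi (Real.exp u)

/-- The continuous extension to `0 ≤ re z` of the Laplace transform of `normalizedPsi - 1`. The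
Dirichlet series modulo `1` is the negative logarithmic derivative of `ζ`, and
`LFunctionResidueClassAux` is that series without its pole at `s = 1`. -/
noncomputable def psiLaplace (z : ℂ) : ℂ :=
  (ArithmeticFunction.vonMangoldt.LFunctionResidueClassAux (1 : ZMod 1) (1 + z) - 1) / (1 + z)

theorem exp_mul_normalizedPsi (u : ℝ) :
    Real.exp u * normalizedPsi u = Chebyshev.psi (Real.exp u) := by
  rw [normalizedPsi, ← mul_assoc, ← Real.exp_add, add_neg_cancel, Real.exp_zero, one_mul]

theorem monotone_exp_mul_normalizedPsi : Monotone fun u ↦ Real.exp u * normalizedPsi u := by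
  simp only [exp_mul_normalizedPsi]
  exact Chebyshev.psi_mono.comp Real.exp_monotone

theorem normalizedPsi_nonneg (u : ℝ) : 0 ≤ normalizedPsi u :=
  mul_nonneg (Real.exp_pos _).le (Chebyshev.psi_nonneg _)

theorem norm_normalizedPsi_le (u : ℝ) : ‖normalizedPsi u‖ ≤ Real.log 4 + 4 := by
  rw [Real.norm_of_nonneg (normalizedPsi_nonneg u)]
  refine le_of_mul_le_mul_left ?_ (Real.exp_pos u)
  rw [exp_mul_normalizedPsi, mul_comm]
  exact Chebyshev.psi_le_const_mul_self (Real.exp_pos u).le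

theorem measurable_normalizedPsi : Measurable normalizedPsi :=
  (Real.measurable_exp.comp measurable_neg).mul
    (Chebyshev.psi_mono.measurable.comp Real.measurable_exp)

theorem continuousOn_psiLaplace : ContinuousOn psiLaplace {z | 0 ≤ z.re} := by
  refine ContinuousOn.div (ContinuousOn.sub ?_ continuousOn_const) (by fun_prop) fun z hz hzero ↦ ?_
  · exact (ArithmeticFunction.vonMangoldt.continuousOn_LFunctionResidueClassAux (1 : ZMod 1)).comp
      (by fun_prop) fun z hz ↦ by simpa using hz
  · have hre : 1 + z.re = 0 := by simpa using congrArg Complex.re hzero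
    have hz' : 0 ≤ z.re := hz
    linarith

theorem LSeries_vonMangoldt_eq_mul_integral_psi {s : ℂ} (hs : 1 < s.re) :
    LSeries (fun n ↦ (ArithmeticFunction.vonMangoldt n : ℂ)) s =
      s * ∫ t in Ioi (1 : ℝ), (Chebyshev.psi t : ℂ) * (t : ℂ) ^ (-(s + 1)) := by
  rw [LSeries_eq_mul_integral_of_nonneg (fun n ↦ ArithmeticFunction.vonMangoldt n) zero_le_one hs _
    (fun n ↦ ArithmeticFunction.vonMangoldt_nonneg)]
  · simp only [Chebyshev.psi]
    congr 2
    ext t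
    push_cast
    rfl
  · refine .of_bound (Real.log 4 + 4) (.of_forall fun n ↦ ?_)
    have hpsi : Chebyshev.psi n = ∑ k ∈ Finset.Icc 1 n, ArithmeticFunction.vonMangoldt k := by
      rw [Chebyshev.psi, Nat.floor_natCast]
      rfl
    rw [← hpsi, Real.norm_of_nonneg (Chebyshev.psi_nonneg _), Real.rpow_one, Real.norm_natCast]
    exact Chebyshev.psi_le_const_mul_self n.cast_nonneg

theorem integral_normalizedPsi_mul_exp (z : ℂ) :
    ∫ u in Ioi (0 : ℝ), (normalizedPsi u : ℂ) * Complex.exp (-z * u) =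
      ∫ t in Ioi (1 : ℝ), (Chebyshev.psi t : ℂ) * (t : ℂ) ^ (-(1 + z + 1)) := by
  rw [← Real.exp_zero, ← integral_comp_exp_Ioi]
  refine setIntegral_congr_fun measurableSet_Ioi fun u _ ↦ ?_
  have hcpow : ((Real.exp u : ℝ) : ℂ) ^ (-(1 + z + 1)) = Complex.exp (u * -(1 + z + 1)) := by
    rw [Complex.cpow_def_of_ne_zero (by exact_mod_cast (Real.exp_pos u).ne'),
      ← Complex.ofReal_log (Real.exp_pos u).le, Real.log_exp]
  simp only [hcpow, normalizedPsi, Complex.real_smul]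
  push_cast
  rw [mul_left_comm, mul_right_comm, mul_comm, ← Complex.exp_add, ← Complex.exp_add]
  ring_nf

theorem LSeries_vonMangoldt_eq {z : ℂ} (hz : 0 < z.re) :
    LSeries (fun n ↦ (ArithmeticFunction.vonMangoldt n : ℂ)) (1 + z) =
      (1 + z) * psiLaplace z + 1 + 1 / z := by
  have hs : 1 < (1 + z).re := by simpa using hz
  have hs0 : 1 + z ≠ 0 := fun h ↦ by norm_num [h] at hs
  have haux := ArithmeticFunction.vonMangoldt.eqOn_LFunctionResidueClassAux (a := (1 : ZMod 1))
    isUnit_one (Set.mem_ofPred.mpr hs)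
  have hresidue : (fun n ↦ (ArithmeticFunction.vonMangoldt.residueClass (1 : ZMod 1) n : ℂ)) =
      fun n ↦ (ArithmeticFunction.vonMangoldt n : ℂ) := by
    ext n
    rw [ArithmeticFunction.vonMangoldt.residueClass, Set.indicator_of_mem]
    exact Subsingleton.elim _ _
  rw [hresidue] at haux
  rw [psiLaplace, haux, mul_div_cancel₀ _ hs0]
  simp

theorem integral_normalizedPsi_sub_one_mul_exp {z : ℂ} (hz : 0 < z.re) :
    ∫ u in Ioi (0 : ℝ), ((normalizedPsi u - 1 : ℝ) : ℂ) * Complex.exp (-z * u) = psiLaplace z := by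
  have hs : 1 < (1 + z).re := by simpa using hz
  have hz0 : z ≠ 0 := fun h ↦ by simp [h] at hz
  have hs0 : 1 + z ≠ 0 := fun h ↦ by norm_num [h] at hs
  have hint : IntegrableOn (fun u : ℝ ↦ (normalizedPsi u : ℂ) * Complex.exp (-z * u)) (Ioi 0) :=
    (integrableOn_exp_neg_mul hz).bdd_mul (c := Real.log 4 + 4)
      (Complex.measurable_ofReal.comp measurable_normalizedPsi).aestronglyMeasurable
      (.of_forall fun u ↦ by simpa using norm_normalizedPsi_le u)
  have hexp : ∫ u in Ioi (0 : ℝ), Complex.exp (-z * u) = 1 / z := by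
    rw [integral_exp_mul_complex_Ioi (by simpa using hz)]
    simp
  have hL := LSeries_vonMangoldt_eq_mul_integral_psi hs
  rw [LSeries_vonMangoldt_eq hz, ← integral_normalizedPsi_mul_exp] at hL
  simp only [Complex.ofReal_sub, Complex.ofReal_one, sub_mul, one_mul]
  rw [integral_sub hint (integrableOn_exp_neg_mul hz), hexp]
  refine mul_left_cancel₀ hs0 ?_
  have hfrac : (1 + z) * (1 / z) = 1 / z + 1 := by field_simp
  linear_combination -hL - hfrac

theorem eventually_psi_lt {c : ℝ} (hc : 1 < c) : ∀ᶠ x in atTop, Chebyshev.psi x < c * x := by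
  have hnormalized := eventually_lt_of_continuousOn_laplace measurable_normalizedPsi
    norm_normalizedPsi_le normalizedPsi_nonneg monotone_exp_mul_normalizedPsi
    continuousOn_psiLaplace (fun _ ↦ integral_normalizedPsi_sub_one_mul_exp) hc
  filter_upwards [Real.tendsto_log_atTop.eventually hnormalized, eventually_gt_atTop 0]
    with x hx hx0
  have hpsi := exp_mul_normalizedPsi (Real.log x)
  rw [Real.exp_log hx0] at hpsi
  rw [← hpsi, mul_comm]
  exact mul_lt_mul_of_pos_right hx hx0

theorem eventually_lcmUpto_le_pow {r : ℝ} (hr : Real.exp 1 < r) :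
    ∀ᶠ n : ℕ in atTop, (Nat.lcmUpto n : ℝ) ≤ r ^ n := by
  have hr0 : 0 < r := (Real.exp_pos 1).trans hr
  filter_upwards [tendsto_natCast_atTop_atTop.eventually
    (eventually_psi_lt ((Real.lt_log_iff_exp_lt hr0).2 hr))] with n hn
  rw [Chebyshev.psi_eq_log_lcmUpto,
    Real.log_lt_iff_lt_exp (by exact_mod_cast Nat.lcmUpto_pos n), mul_comm, Real.exp_nat_mul,
    Real.exp_log hr0] at hn
  exact hn.le

/-! ### Linear forms in `1` and the logarithm -/

section Quadratic

variable (S P : ℕ)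

/-- The smaller root of `x² - √S x + P`. -/
noncomputable def rootLo : ℝ := (√S - √(S - 4 * P)) / 2

/-- The larger root of `x² - √S x + P`. -/
noncomputable def rootHi : ℝ := (√S + √(S - 4 * P)) / 2

/-- The factor `√S / (rootHi - rootLo)` that makes differences of odd powers of the roots of
`x² - √S x + P` rational. -/
noncomputable def rootScale : ℝ := √S / √(S - 4 * P)

/-- The constant coefficient of the Laurent polynomial `(x + P / x) ^ b`. -/
def centralCoeff (b : ℕ) : ℕ :=
  ∑ ij ∈ antidiagonal b with ij.1 = ij.2, b.choose ij.1 * P ^ ij.2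

/-- The constant coefficient of the Laurent polynomial `(√S - (x + P / x)) ^ (2 * m)`. The exponent
`(2 * m - b) / 2` is exact whenever `centralCoeff P b ≠ 0`. -/
def logCoeff (m : ℕ) : ℕ :=
  ∑ b ∈ Finset.range (2 * m + 1), (2 * m).choose b * (S ^ ((2 * m - b) / 2) * centralCoeff P b)

/-- The integral of `(√S - (x + P / x)) ^ (2 * m) / x` between the roots of `x² - √S x + P`, where
the base vanishes at both ends. -/
noncomputable def rootIntegral (m : ℕ) : ℝ :=
  ∫ x in rootLo S P..rootHi S P, (√S - (x + P / x)) ^ (2 * m) * x⁻¹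

variable {S P}

theorem four_mul_lt_cast (h : 4 * P < S) : (4 : ℝ) * P < S := by exact_mod_cast h

theorem rootLo_add_rootHi : rootLo S P + rootHi S P = √S := by
  unfold rootLo rootHi
  ring

theorem rootLo_mul_rootHi (h : 4 * P < S) : rootLo S P * rootHi S P = P := by
  have := four_mul_lt_cast h
  have h₁ := Real.sq_sqrt (Nat.cast_nonneg (α := ℝ) S)
  have h₂ := Real.sq_sqrt (show (0 : ℝ) ≤ S - 4 * P by linarith)
  unfold rootLo rootHi
  linear_combination (h₁ - h₂) / 4

theorem rootLo_lt_rootHi (h : 4 * P < S) : rootLo S P < rootHi S P := by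
  have := Real.sqrt_pos.2 (sub_pos.2 (four_mul_lt_cast h))
  unfold rootLo rootHi
  linarith

theorem rootLo_pos (hP : 0 < P) (h : 4 * P < S) : 0 < rootLo S P := by
  have hP' : (0 : ℝ) < P := by exact_mod_cast hP
  refine half_pos (sub_pos.2 (Real.sqrt_lt_sqrt ?_ ?_)) <;> linarith [four_mul_lt_cast h]

theorem rootScale_pos (h : 4 * P < S) : 0 < rootScale S P := by
  have hS : (0 : ℝ) < S := by exact_mod_cast (Nat.zero_le _).trans_lt h
  exact div_pos (Real.sqrt_pos.2 hS) (Real.sqrt_pos.2 (sub_pos.2 (four_mul_lt_cast h)))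

theorem rootScale_mul_rootHi_sub_rootLo (h : 4 * P < S) :
    rootScale S P * (rootHi S P - rootLo S P) = √S := by
  have := (Real.sqrt_pos.2 (sub_pos.2 (four_mul_lt_cast h))).ne'
  unfold rootScale rootLo rootHi
  field_simp
  ring

theorem sqrt_pow_two_mul (k : ℕ) : √(S : ℝ) ^ (2 * k) = S ^ k := by
  rw [pow_mul, Real.sq_sqrt (Nat.cast_nonneg S)]

theorem sqrt_pow_mul_scaled_sub_pow_mem_bot (h : 4 * P < S) :
    ∀ {e j : ℕ}, Even (j + e) →
      √S ^ j * (rootScale S P * (rootHi S P ^ e - rootLo S P ^ e)) ∈ (⊥ : Subring ℝ)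
  | 0, j, _ => by simp
  | 1, j, hj => by
    obtain ⟨k, hk⟩ := hj
    rw [pow_one, pow_one, rootScale_mul_rootHi_sub_rootLo h, ← pow_succ, hk, ← two_mul,
      sqrt_pow_two_mul]
    exact pow_mem (natCast_mem _ S) k
  | e + 2, j, hj => by
    have hrec : √S ^ j * (rootScale S P * (rootHi S P ^ (e + 2) - rootLo S P ^ (e + 2))) =
        √S ^ (j + 1) * (rootScale S P * (rootHi S P ^ (e + 1) - rootLo S P ^ (e + 1))) -
          P * (√S ^ j * (rootScale S P * (rootHi S P ^ e - rootLo S P ^ e))) := by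
      rw [← rootLo_mul_rootHi h, pow_succ √(S : ℝ), ← rootLo_add_rootHi (P := P)]
      ring
    rw [hrec]
    refine sub_mem (sqrt_pow_mul_scaled_sub_pow_mem_bot h ?_)
      (mul_mem (natCast_mem _ P) (sqrt_pow_mul_scaled_sub_pow_mem_bot h ?_))
    · rwa [add_assoc, add_comm 1]
    · rwa [← add_assoc, Nat.even_add, iff_true_right even_two] at hj

theorem zero_notMem_uIcc_roots (hP : 0 < P) (h : 4 * P < S) :
    (0 : ℝ) ∉ uIcc (rootLo S P) (rootHi S P) := by
  rw [Set.uIcc_of_le (rootLo_lt_rootHi h).le]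
  exact fun h₀ ↦ (rootLo_pos hP h).not_ge h₀.1

theorem integral_rootLo_rootHi_inv (hP : 0 < P) (h : 4 * P < S) :
    ∫ x in rootLo S P..rootHi S P, x⁻¹ = Real.log (rootHi S P / rootLo S P) :=
  integral_inv (zero_notMem_uIcc_roots hP h)

theorem integral_zpow_eq_div {e : ℕ} (he : e ≠ 0) (a b : ℝ) :
    ∫ x in a..b, x ^ ((e : ℤ) - 1) = (b ^ e - a ^ e) / e := by
  rw [integral_zpow (Or.inl (by omega))]
  simp

theorem pow_mul_integral_zpow_neg (hP : 0 < P) (h : 4 * P < S) {e : ℕ} (he : e ≠ 0) :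
    P ^ e * ∫ x in rootLo S P..rootHi S P, x ^ (-(e : ℤ) - 1) =
      (rootHi S P ^ e - rootLo S P ^ e) / e := by
  have hlo := rootLo_pos hP h
  have hhi := hlo.trans (rootLo_lt_rootHi h)
  rw [integral_zpow (Or.inr ⟨by omega, zero_notMem_uIcc_roots hP h⟩), ← rootLo_mul_rootHi h]
  simp only [sub_add_cancel, zpow_neg, zpow_natCast]
  push_cast
  rw [sub_add_cancel]
  field_simp
  ring

theorem lcmUpto_mul_scaled_monomial_mem_bot (hP : 0 < P) (h : 4 * P < S) {n k i j : ℕ}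
    (hij : i ≠ j) (hi : i ≤ n) (hj : j ≤ n) (heven : Even (k + (i + j))) :
    (Nat.lcmUpto n : ℝ) * (√S ^ k * (rootScale S P *
      (P ^ j * ∫ x in rootLo S P..rootHi S P, x ^ ((i : ℤ) - j - 1)))) ∈ (⊥ : Subring ℝ) := by
  obtain ⟨e, c, he, hen, hke, hint⟩ : ∃ e c : ℕ, e ≠ 0 ∧ e ≤ n ∧ Even (k + e) ∧
      P ^ j * ∫ x in rootLo S P..rootHi S P, x ^ ((i : ℤ) - j - 1) =
        P ^ c * ((rootHi S P ^ e - rootLo S P ^ e) / e) := by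
    rcases hij.lt_or_gt with hlt | hlt
    · obtain ⟨e, rfl⟩ := Nat.exists_eq_add_of_lt hlt
      refine ⟨e + 1, i, by omega, by omega, by grind, ?_⟩
      rw [← pow_mul_integral_zpow_neg hP h (by omega), ← mul_assoc, ← pow_add, add_assoc]
      push_cast
      simp
    · obtain ⟨e, rfl⟩ := Nat.exists_eq_add_of_lt hlt
      refine ⟨e + 1, j, by omega, by omega, by grind, ?_⟩
      rw [← integral_zpow_eq_div (by omega)]
      push_cast
      ring_nf
  obtain ⟨d, hd⟩ : e ∣ Nat.lcmUpto n := Finset.dvd_lcm (f := id) (by simp; omega)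
  have he' : (e : ℝ) ≠ 0 := by exact_mod_cast he
  have hfactor : (Nat.lcmUpto n : ℝ) * (√S ^ k * (rootScale S P *
      (P ^ c * ((rootHi S P ^ e - rootLo S P ^ e) / e)))) =
      d * P ^ c * (√S ^ k * (rootScale S P * (rootHi S P ^ e - rootLo S P ^ e))) := by
    rw [hd]
    push_cast
    field_simp
  rw [hint, hfactor]
  exact mul_mem (mul_mem (natCast_mem _ d) (pow_mem (natCast_mem _ P) c))
    (sqrt_pow_mul_scaled_sub_pow_mem_bot h hke)

theorem intervalIntegrable_zpow_roots (hP : 0 < P) (h : 4 * P < S) (k : ℤ) :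
    IntervalIntegrable (fun x : ℝ ↦ x ^ k) volume (rootLo S P) (rootHi S P) :=
  intervalIntegral.intervalIntegrable_zpow (Or.inr (zero_notMem_uIcc_roots hP h))

theorem add_div_pow_mul_inv {x : ℝ} (hx : x ≠ 0) (p : ℝ) (b : ℕ) :
    (x + p / x) ^ b * x⁻¹ = ∑ ij ∈ antidiagonal b,
      b.choose ij.1 * (p ^ ij.2 * x ^ ((ij.1 : ℤ) - ij.2 - 1)) := by
  rw [(Commute.all x (p / x)).add_pow', Finset.sum_mul]
  refine Finset.sum_congr rfl fun ij _ ↦ ?_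
  rw [nsmul_eq_mul, div_pow, zpow_sub₀ hx, zpow_sub₀ hx]
  simp only [zpow_natCast, zpow_one]
  field_simp

theorem integral_add_div_pow_mul_inv (hP : 0 < P) (h : 4 * P < S) (b : ℕ) :
    ∫ x in rootLo S P..rootHi S P, (x + P / x) ^ b * x⁻¹ =
      ∑ ij ∈ antidiagonal b, b.choose ij.1 *
        (P ^ ij.2 * ∫ x in rootLo S P..rootHi S P, x ^ ((ij.1 : ℤ) - ij.2 - 1)) := by
  have hint (k : ℤ) := intervalIntegrable_zpow_roots hP h k
  rw [intervalIntegral.integral_congr fun x hx ↦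
      add_div_pow_mul_inv (ne_of_mem_of_not_mem hx (zero_notMem_uIcc_roots hP h)) P b,
    intervalIntegral.integral_finsetSum fun ij _ ↦ ((hint _).const_mul _).const_mul _]
  simp only [intervalIntegral.integral_const_mul]

theorem lcmUpto_mul_scaled_moment_sub_mem_bot (hP : 0 < P) (h : 4 * P < S) {n k b : ℕ}
    (hb : b ≤ n) (heven : Even (k + b)) :
    (Nat.lcmUpto n : ℝ) * (√S ^ k * (rootScale S P *
      ((∫ x in rootLo S P..rootHi S P, (x + P / x) ^ b * x⁻¹) -
        centralCoeff P b * Real.log (rootHi S P / rootLo S P)))) ∈ (⊥ : Subring ℝ) := by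
  rw [integral_add_div_pow_mul_inv hP h, centralCoeff, Nat.cast_sum, Finset.sum_filter,
    Finset.sum_mul, ← Finset.sum_sub_distrib]
  simp only [Finset.mul_sum]
  refine sum_mem fun ⟨i, j⟩ hij ↦ ?_
  obtain rfl : i + j = b := mem_antidiagonal.1 hij
  dsimp only
  split_ifs with heq
  · subst heq
    rw [sub_self, zero_sub]
    simp [← integral_rootLo_rootHi_inv hP h, mul_assoc]
  · have hmem := lcmUpto_mul_scaled_monomial_mem_bot hP h heq (Nat.le_of_add_right_le hb)
      (le_of_add_le_right hb) heven
    convert mul_mem (natCast_mem _ ((i + j).choose i)) hmem using 1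
    ring

theorem centralCoeff_eq_zero_of_odd {b : ℕ} (hb : Odd b) : centralCoeff P b = 0 := by
  refine Finset.sum_eq_zero fun ij hij ↦ absurd hb ?_
  rw [Finset.mem_filter, mem_antidiagonal] at hij
  grind

theorem cast_logCoeff (m : ℕ) :
    (logCoeff S P m : ℝ) = ∑ b ∈ Finset.range (2 * m + 1),
      (-1) ^ b * (2 * m).choose b * √S ^ (2 * m - b) * centralCoeff P b := by
  unfold logCoeff
  push_cast
  refine Finset.sum_congr rfl fun b hb ↦ ?_
  rcases Nat.even_or_odd' b with ⟨c, rfl | rfl⟩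
  · rw [← Nat.mul_sub, Nat.mul_div_cancel_left _ two_pos, sqrt_pow_two_mul]
    simp [mul_assoc]
  · simp [centralCoeff_eq_zero_of_odd (odd_two_mul_add_one c)]

theorem sub_add_div_pow_mul_inv (s x p : ℝ) (n : ℕ) :
    (s - (x + p / x)) ^ n * x⁻¹ = ∑ b ∈ Finset.range (n + 1),
      (-1) ^ b * n.choose b * s ^ (n - b) * ((x + p / x) ^ b * x⁻¹) := by
  rw [sub_eq_neg_add, add_pow, Finset.sum_mul]
  refine Finset.sum_congr rfl fun b _ ↦ ?_
  rw [neg_pow]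
  ring

theorem rootIntegral_eq_sum (hP : 0 < P) (h : 4 * P < S) (m : ℕ) :
    rootIntegral S P m = ∑ b ∈ Finset.range (2 * m + 1),
      (-1) ^ b * (2 * m).choose b * √S ^ (2 * m - b) *
        ∫ x in rootLo S P..rootHi S P, (x + P / x) ^ b * x⁻¹ := by
  unfold rootIntegral
  simp only [sub_add_div_pow_mul_inv]
  rw [intervalIntegral.integral_finsetSum fun b _ ↦ ?_]
  · simp only [intervalIntegral.integral_const_mul]
  · refine ContinuousOn.intervalIntegrable fun x hx ↦ ContinuousAt.continuousWithinAt ?_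
    have : x ≠ 0 := ne_of_mem_of_not_mem hx (zero_notMem_uIcc_roots hP h)
    fun_prop (disch := assumption)

theorem lcmUpto_mul_scaled_rootIntegral_sub_mem_bot (hP : 0 < P) (h : 4 * P < S) (m : ℕ) :
    (Nat.lcmUpto (2 * m) : ℝ) * (rootScale S P * (rootIntegral S P m -
      logCoeff S P m * Real.log (rootHi S P / rootLo S P))) ∈ (⊥ : Subring ℝ) := by
  rw [rootIntegral_eq_sum hP h, cast_logCoeff, Finset.sum_mul, ← Finset.sum_sub_distrib]
  simp only [Finset.mul_sum]
  refine sum_mem fun b hb ↦ ?_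
  have hb' : b ≤ 2 * m := Nat.lt_succ_iff.1 (Finset.mem_range.1 hb)
  have hmem := lcmUpto_mul_scaled_moment_sub_mem_bot hP h (k := 2 * m - b) hb'
    (by rw [Nat.sub_add_cancel hb']; exact even_two_mul m)
  have hcoeff : (-1 : ℝ) ^ b * (2 * m).choose b ∈ (⊥ : Subring ℝ) :=
    mul_mem (pow_mem (neg_mem (one_mem _)) b) (natCast_mem _ _)
  convert mul_mem hcoeff hmem using 1
  ring

theorem centralCoeff_le (b : ℕ) : (centralCoeff P b : ℝ) ≤ (2 * √P) ^ b := by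
  calc (centralCoeff P b : ℝ)
      = ∑ ij ∈ antidiagonal b with ij.1 = ij.2, (b.choose ij.1 : ℝ) * √P ^ b := by
        unfold centralCoeff
        push_cast
        refine Finset.sum_congr rfl fun ij hij ↦ ?_
        obtain ⟨hsum, heq⟩ := Finset.mem_filter.1 hij
        rw [← mem_antidiagonal.1 hsum, heq, ← two_mul, sqrt_pow_two_mul]
    _ ≤ ∑ ij ∈ antidiagonal b, (b.choose ij.1 : ℝ) * √P ^ b :=
        Finset.sum_le_sum_of_subset_of_nonneg (Finset.filter_subset _ _)
          fun _ _ _ ↦ by positivity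
    _ = (2 * √P) ^ b := by
        rw [← Finset.sum_mul, mul_pow]
        congr 1
        have := (Commute.all (1 : ℝ) 1).add_pow' b
        norm_num at this
        exact this.symm

theorem logCoeff_pos (hS : 0 < S) (m : ℕ) : 0 < logCoeff S P m := by
  refine Finset.sum_pos' (fun _ _ ↦ Nat.zero_le _) ⟨0, by simp, ?_⟩
  simp [centralCoeff, Finset.sum_filter, hS]

theorem logCoeff_le (m : ℕ) : (logCoeff S P m : ℝ) ≤ (√S + 2 * √P) ^ (2 * m) := by
  rw [cast_logCoeff, add_comm √(S : ℝ), add_pow]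
  refine Finset.sum_le_sum fun b _ ↦ ?_
  have hsign : (-1 : ℝ) ^ b ≤ 1 := by simpa using le_abs_self ((-1 : ℝ) ^ b)
  calc (-1) ^ b * (2 * m).choose b * √S ^ (2 * m - b) * (centralCoeff P b : ℝ)
      = (-1) ^ b * (centralCoeff P b * (√S ^ (2 * m - b) * (2 * m).choose b)) := by ring
    _ ≤ 1 * ((2 * √P) ^ b * (√S ^ (2 * m - b) * (2 * m).choose b)) := by
        gcongr
        exact centralCoeff_le b
    _ = (2 * √P) ^ b * √S ^ (2 * m - b) * (2 * m).choose b := by ring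

end Quadratic

/-! ### Growth of the linear forms -/

theorem exists_mul_pow_le_integral_pow_mul {f w : ℝ → ℝ} {a b x₀ η : ℝ}
    (hf : ContinuousOn f (Icc a b)) (hw : ContinuousOn w (Icc a b))
    (hf₀ : ∀ x ∈ Icc a b, 0 ≤ f x) (hw₀ : ∀ x ∈ Icc a b, 0 < w x)
    (hx₀ : x₀ ∈ Ioo a b) (hη₀ : 0 ≤ η) (hη : η < f x₀) :
    ∃ c > 0, ∀ n : ℕ, c * η ^ n ≤ ∫ x in a..b, f x ^ n * w x := by
  set U : Set ℝ := Ioo a b ∩ f ⁻¹' Ioi η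
  have hUI : U ⊆ Icc a b := Set.inter_subset_left.trans Set.Ioo_subset_Icc_self
  have hUopen : IsOpen U :=
    (hf.mono Set.Ioo_subset_Icc_self).isOpen_inter_preimage isOpen_Ioo isOpen_Ioi
  have hwI : IntegrableOn w (Icc a b) := hw.integrableOn_Icc
  have hw_pos : 0 < ∫ x in U, w x := by
    rw [setIntegral_pos_iff_support_of_nonneg_ae
      ((ae_restrict_iff' hUopen.measurableSet).2 (.of_forall fun x hx ↦ (hw₀ x (hUI hx)).le))
      (hwI.mono_set hUI),
      Set.inter_eq_right.2 fun x hx ↦ Function.mem_support.2 (hw₀ x (hUI hx)).ne']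
    exact hUopen.measure_pos volume ⟨x₀, hx₀, hη⟩
  refine ⟨_, hw_pos, fun n ↦ ?_⟩
  have hfwI : IntegrableOn (fun x ↦ f x ^ n * w x) (Icc a b) :=
    ((hf.pow n).mul hw).integrableOn_Icc
  rw [intervalIntegral.integral_of_le (hx₀.1.trans hx₀.2).le, ← integral_Icc_eq_integral_Ioc,
    mul_comm, ← integral_const_mul]
  calc ∫ x in U, η ^ n * w x ≤ ∫ x in U, f x ^ n * w x := by
        refine setIntegral_mono_on ((hwI.mono_set hUI).const_mul _) (hfwI.mono_set hUI)
          hUopen.measurableSet fun x hx ↦ ?_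
        have := hw₀ x (hUI hx)
        gcongr
        exact hx.2.le
    _ ≤ ∫ x in Icc a b, f x ^ n * w x := by
        refine setIntegral_mono_set hfwI ?_ hUI.eventuallyLE
        exact (ae_restrict_iff' measurableSet_Icc).2
          (.of_forall fun x hx ↦ mul_nonneg (pow_nonneg (hf₀ x hx) n) (hw₀ x hx).le)

theorem eventually_pow_le_mul_pow {r s c : ℝ} (hr : 0 ≤ r) (hrs : r < s) (hc : 0 < c) :
    ∀ᶠ n : ℕ in atTop, r ^ n ≤ c * s ^ n := by
  filter_upwards [(isLittleO_pow_pow_of_lt_left hr hrs).def hc] with n hn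
  rwa [Real.norm_of_nonneg (pow_nonneg hr n),
    Real.norm_of_nonneg (pow_nonneg (hr.trans hrs.le) n)] at hn

section Quadratic

variable {S P : ℕ}

theorem sqrt_sub_add_div_nonneg (hP : 0 < P) (h : 4 * P < S) {x : ℝ}
    (hx : x ∈ Icc (rootLo S P) (rootHi S P)) : 0 ≤ √S - (x + P / x) := by
  have hx₀ : 0 < x := (rootLo_pos hP h).trans_le hx.1
  have hfactor : √S - (x + P / x) = (x - rootLo S P) * (rootHi S P - x) / x := by
    rw [← rootLo_add_rootHi (P := P), ← rootLo_mul_rootHi h]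
    field_simp
    ring
  rw [hfactor]
  exact div_nonneg (mul_nonneg (sub_nonneg.2 hx.1) (sub_nonneg.2 hx.2)) hx₀.le

theorem two_mul_sqrt_le_add_div {p x : ℝ} (hp : 0 ≤ p) (hx : 0 < x) : 2 * √p ≤ x + p / x := by
  have hsq : x + p / x - 2 * √p = (x - √p) ^ 2 / x := by
    have := Real.sq_sqrt hp
    field_simp
    linear_combination - this
  have : 0 ≤ (x - √p) ^ 2 / x := by positivity
  linarith

theorem sqrt_mem_Ioo_roots (hP : 0 < P) (h : 4 * P < S) :
    √P ∈ Ioo (rootLo S P) (rootHi S P) := by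
  have hlo := rootLo_pos hP h
  have hlt := rootLo_lt_rootHi h
  rw [← rootLo_mul_rootHi h]
  exact ⟨Real.lt_sqrt_of_sq_lt (by nlinarith), (Real.sqrt_lt' (by linarith)).2 (by nlinarith)⟩

theorem two_mul_sqrt_lt_sqrt (h : 4 * P < S) : 2 * √P < √S := by
  refine Real.lt_sqrt_of_sq_lt ?_
  rw [mul_pow, Real.sq_sqrt (Nat.cast_nonneg P)]
  linarith [four_mul_lt_cast h]

theorem continuousOn_sqrt_sub_add_div (hP : 0 < P) (h : 4 * P < S) :
    ContinuousOn (fun x ↦ √S - (x + P / x)) (Icc (rootLo S P) (rootHi S P)) := fun x hx ↦ by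
  have : x ≠ 0 := ((rootLo_pos hP h).trans_le hx.1).ne'
  fun_prop (disch := assumption)

theorem continuousOn_inv_roots (hP : 0 < P) (h : 4 * P < S) :
    ContinuousOn (fun x : ℝ ↦ x⁻¹) (Icc (rootLo S P) (rootHi S P)) :=
  continuousOn_inv₀.mono fun _ hx ↦ ((rootLo_pos hP h).trans_le hx.1).ne'

theorem rootIntegral_le (hP : 0 < P) (h : 4 * P < S) (m : ℕ) :
    rootIntegral S P m ≤
      (√S - 2 * √P) ^ (2 * m) * Real.log (rootHi S P / rootLo S P) := by
  have hle := (rootLo_lt_rootHi h).le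
  rw [← integral_rootLo_rootHi_inv hP h, ← intervalIntegral.integral_const_mul]
  refine intervalIntegral.integral_mono_on hle ?_ ?_ fun x hx ↦ ?_
  · exact (((continuousOn_sqrt_sub_add_div hP h).pow _).mul
      (continuousOn_inv_roots hP h)).intervalIntegrable_of_Icc hle
  · exact (continuousOn_const.mul (continuousOn_inv_roots hP h)).intervalIntegrable_of_Icc hle
  · have hx₀ : 0 < x := (rootLo_pos hP h).trans_le hx.1
    have := sqrt_sub_add_div_nonneg hP h hx
    gcongr
    exact two_mul_sqrt_le_add_div (Nat.cast_nonneg P) hx₀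

theorem eventually_pow_le_mul_rootIntegral (hP : 0 < P) (h : 4 * P < S) {r C : ℝ} (hr : 0 ≤ r)
    (hrδ : r < (√S - 2 * √P) ^ 2) (hC : 0 < C) :
    ∀ᶠ m in atTop, r ^ m ≤ C * rootIntegral S P m := by
  obtain ⟨η, hrη, hηδ⟩ := exists_between hrδ
  have hbase : √S - (√P + P / √P) = √S - 2 * √P := by
    rw [Real.div_sqrt]
    ring
  obtain ⟨c, hc, hint⟩ := exists_mul_pow_le_integral_pow_mul
    (f := fun x ↦ (√S - (x + P / x)) ^ 2) ((continuousOn_sqrt_sub_add_div hP h).pow 2)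
    (continuousOn_inv_roots hP h) (fun x _ ↦ sq_nonneg _)
    (fun x hx ↦ inv_pos.2 ((rootLo_pos hP h).trans_le hx.1)) (sqrt_mem_Ioo_roots hP h)
    (hr.trans hrη.le) (by rwa [hbase])
  filter_upwards [eventually_pow_le_mul_pow hr hrη (mul_pos hC hc)] with m hm
  calc r ^ m ≤ C * (c * η ^ m) := by rwa [← mul_assoc]
    _ ≤ C * rootIntegral S P m := by
        gcongr
        simpa only [rootIntegral, pow_mul] using hint m

theorem rootScale_mul_log_eq_neg (h : 4 * P < S) {D : ℝ} (hD : D * (S - 4 * P) = S) :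
    √D * Real.log ((√D - 1) / (√D + 1)) =
      -(rootScale S P * Real.log (rootHi S P / rootLo S P)) := by
  have hdiscr : (0 : ℝ) < S - 4 * P := sub_pos.2 (four_mul_lt_cast h)
  have hsqrtD : √D = rootScale S P := by
    rw [eq_div_of_mul_eq hdiscr.ne' hD, Real.sqrt_div (Nat.cast_nonneg S), rootScale]
  have hquot : (√D - 1) / (√D + 1) = rootLo S P / rootHi S P := by
    have := Real.sqrt_pos.2 hdiscr
    rw [hsqrtD, rootScale, rootLo, rootHi]
    field_simp
  rw [hquot, hsqrtD, ← inv_div, Real.log_inv, mul_neg]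

theorem log_rootHi_div_rootLo_pos (hP : 0 < P) (h : 4 * P < S) :
    0 < Real.log (rootHi S P / rootLo S P) :=
  Real.log_pos ((one_lt_div (rootLo_pos hP h)).2 (rootLo_lt_rootHi h))

theorem rootIntegral_nonneg (hP : 0 < P) (h : 4 * P < S) (m : ℕ) : 0 ≤ rootIntegral S P m :=
  intervalIntegral.integral_nonneg (rootLo_lt_rootHi h).le fun _ hx ↦
    mul_nonneg (pow_nonneg (sqrt_sub_add_div_nonneg hP h hx) _)
      (inv_nonneg.2 ((rootLo_pos hP h).trans_le hx.1).le)

theorem eventually_lcmUpto_mul_rootIntegral_le (hP : 0 < P) (h : 4 * P < S) {r : ℝ}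
    (hr : (Real.exp 1 * (√S - 2 * √P)) ^ 2 < r) :
    ∀ᶠ m in atTop, Nat.lcmUpto (2 * m) * (rootScale S P * rootIntegral S P m) ≤ r ^ m := by
  set δ := √(S : ℝ) - 2 * √P
  have hδ : 0 < δ := sub_pos.2 (two_mul_sqrt_lt_sqrt h)
  obtain ⟨s, hes, hsr⟩ := exists_between ((lt_div_iff₀ hδ).2 (Real.lt_sqrt_of_sq_lt hr))
  have hs : 0 < s := (Real.exp_pos 1).trans hes
  have hsδ : (s * δ) ^ 2 < r := (Real.lt_sqrt (by positivity)).1 ((lt_div_iff₀ hδ).1 hsr)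
  have hscale := rootScale_pos h
  have hlog := log_rootHi_div_rootLo_pos hP h
  filter_upwards [(tendsto_id.const_mul_atTop' two_pos).eventually (eventually_lcmUpto_le_pow hes),
    eventually_pow_le_mul_pow (sq_nonneg _) hsδ (inv_pos.2 (mul_pos hscale hlog))] with m hlcm hpow
  rw [le_inv_mul_iff₀ (mul_pos hscale hlog)] at hpow
  calc Nat.lcmUpto (2 * m) * (rootScale S P * rootIntegral S P m)
      ≤ s ^ (2 * m) * (rootScale S P * (δ ^ (2 * m) * Real.log (rootHi S P / rootLo S P))) := by
        have := rootIntegral_nonneg hP h m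
        gcongr
        · exact hlcm
        · exact rootIntegral_le hP h m
    _ = rootScale S P * Real.log (rootHi S P / rootLo S P) * ((s * δ) ^ 2) ^ m := by
        rw [← pow_mul, mul_pow]
        ring
    _ ≤ r ^ m := hpow

theorem eventually_pow_mul_logCoeff_le (hP : 0 < P) (h : 4 * P < S) {r : ℝ} (hr : 0 ≤ r)
    (hrR : r < ((√S - 2 * √P) / (√S + 2 * √P)) ^ 2) :
    ∀ᶠ m in atTop, r ^ m * logCoeff S P m ≤ rootScale S P * rootIntegral S P m := by
  have hΛ : 0 < √(S : ℝ) + 2 * √P := by linarith [two_mul_sqrt_lt_sqrt h, Real.sqrt_nonneg (P : ℝ)]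
  rw [div_pow, lt_div_iff₀ (pow_pos hΛ 2)] at hrR
  filter_upwards [eventually_pow_le_mul_rootIntegral hP h (by positivity) hrR (rootScale_pos h)]
    with m hm
  calc r ^ m * logCoeff S P m ≤ r ^ m * (√S + 2 * √P) ^ (2 * m) := by
        gcongr
        exact logCoeff_le m
    _ = (r * (√S + 2 * √P) ^ 2) ^ m := by rw [mul_pow, ← pow_mul]
    _ ≤ rootScale S P * rootIntegral S P m := hm

theorem exists_abs_linearForm_eq (hP : 0 < P) (h : 4 * P < S) {D : ℝ} (hD : D * (S - 4 * P) = S)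
    (m : ℕ) :
    ∃ b : ℤ, |((Nat.lcmUpto (2 * m) * logCoeff S P m : ℕ) : ℤ) *
        (√D * Real.log ((√D - 1) / (√D + 1))) - b| =
      Nat.lcmUpto (2 * m) * (rootScale S P * rootIntegral S P m) := by
  obtain ⟨b, hb⟩ := Subring.mem_bot.1 (lcmUpto_mul_scaled_rootIntegral_sub_mem_bot hP h m)
  have hnonneg := mul_nonneg (rootScale_pos h).le (rootIntegral_nonneg hP h m)
  refine ⟨b, ?_⟩
  rw [rootScale_mul_log_eq_neg h hD, hb, ← abs_of_nonneg (mul_nonneg (Nat.cast_nonneg _) hnonneg),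
    ← abs_neg]
  push_cast
  ring_nf

end Quadratic

/-! ### Numerical bounds -/

theorem lt_sqrt_add_two_mul_sqrt : 13.4 < √(46 : ℝ) + 2 * √11 := by
  have h₄₆ : 6.78 < √(46 : ℝ) := Real.lt_sqrt_of_sq_lt (by norm_num)
  have h₁₁ : 3.31 < √(11 : ℝ) := Real.lt_sqrt_of_sq_lt (by norm_num)
  linarith

theorem lt_log_sqrt_add_two_mul_sqrt : 18 / 7 < Real.log (√46 + 2 * √11) := by
  have hexp : Real.exp 1 ^ 18 < 13.4 ^ 7 := by
    calc Real.exp 1 ^ 18 < 2.7182818286 ^ 18 := by gcongr; exact Real.exp_one_lt_d9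
      _ < 13.4 ^ 7 := by norm_num
  have hlog := Real.log_lt_log (by positivity) hexp
  rw [Real.log_pow, Real.log_pow, Real.log_exp] at hlog
  have := Real.log_lt_log (by norm_num) lt_sqrt_add_two_mul_sqrt
  norm_num at hlog ⊢
  linarith

theorem sqrt_sub_two_mul_sqrt_eq : √(46 : ℝ) - 2 * √11 = 2 / (√46 + 2 * √11) := by
  rw [eq_div_iff (by positivity)]
  linear_combination Real.sq_sqrt (show (0 : ℝ) ≤ 46 by norm_num) -
    4 * Real.sq_sqrt (show (0 : ℝ) ≤ 11 by norm_num)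

theorem exp_one_mul_sqrt_sub_lt_one : Real.exp 1 * (√46 - 2 * √11) < 1 := by
  rw [sqrt_sub_two_mul_sqrt_eq, mul_div_assoc', div_lt_one (by positivity)]
  linarith [Real.exp_one_lt_d9, lt_sqrt_add_two_mul_sqrt]

theorem log_div_log_lt :
    Real.log ((√46 - 2 * √11) / (√46 + 2 * √11)) / Real.log (Real.exp 1 * (√46 - 2 * √11)) <
      5.08121 := by
  have hΛ : √(46 : ℝ) + 2 * √11 ≠ 0 := by positivity
  have hquot : (2 / (√(46 : ℝ) + 2 * √11)) ≠ 0 := by positivity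
  have hL := lt_log_sqrt_add_two_mul_sqrt
  have hlog_two := Real.log_two_lt_d9
  rw [sqrt_sub_two_mul_sqrt_eq, Real.log_div hquot hΛ, Real.log_mul (Real.exp_ne_zero 1) hquot,
    Real.log_div two_ne_zero hΛ, Real.log_exp, div_lt_iff_of_neg (by linarith)]
  linarith

end IrrationalityMeasure

open IrrationalityMeasure in
theorem irrationality_measure_alpha_7_general {S P : ℕ} (hP : 0 < P) (h : 4 * P < S) {D : ℝ}
    (hD : D * (S - 4 * P) = S) (hδ : Real.exp 1 * (√S - 2 * √P) < 1) {κ : ℝ}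
    (hκ : Real.log ((√S - 2 * √P) / (√S + 2 * √P)) / Real.log (Real.exp 1 * (√S - 2 * √P)) < κ) :
    (goodApproximations (√D * Real.log ((√D - 1) / (√D + 1))) κ).Finite := by
  have hδ₀ : 0 < √(S : ℝ) - 2 * √P := sub_pos.2 (two_mul_sqrt_lt_sqrt h)
  have hΛ : √(S : ℝ) - 2 * √P ≤ √S + 2 * √P := by linarith [Real.sqrt_nonneg (P : ℝ)]
  choose b hb using exists_abs_linearForm_eq hP h hD
  refine finite_goodApproximations_of_linearForms
    (a := fun m ↦ ((Nat.lcmUpto (2 * m) * logCoeff S P m : ℕ) : ℤ)) (b := b)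
    (ρ := (Real.exp 1 * (√S - 2 * √P)) ^ 2) (R := ((√S - 2 * √P) / (√S + 2 * √P)) ^ 2)
    (by positivity) (pow_lt_one₀ (by positivity) hδ two_ne_zero) (by positivity)
    (pow_le_one₀ (by positivity) (div_le_one_of_le₀ hΛ (by positivity)))
    (.of_forall fun m ↦ ?_) (fun r hr ↦ ?_) (fun r hr hrR ↦ ?_) ?_
  · exact_mod_cast (mul_pos (Nat.lcmUpto_pos _) (logCoeff_pos (by omega) m)).ne'
  · simpa only [hb] using eventually_lcmUpto_mul_rootIntegral_le hP h hr
  · filter_upwards [eventually_pow_mul_logCoeff_le hP h hr.le hrR] with m hm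
    rw [hb, Int.cast_natCast, Nat.abs_cast, Nat.cast_mul, mul_left_comm]
    gcongr
  · rwa [Real.log_pow, Real.log_pow, mul_div_mul_left _ _ (by norm_num)]

theorem irrationality_measure_alpha_7 :
    ∀ κ : ℝ, κ > 5.08121 →
      {pq : ℤ × ℕ+ |
        |Real.sqrt 23 * Real.log ((Real.sqrt 23 - 1) / (Real.sqrt 23 + 1)) -
            (pq.1 : ℝ) / ((pq.2 : ℕ) : ℝ)| <
          ((pq.2 : ℕ) : ℝ) ^ (-κ)}.Finite := by
  intro κ hκ
  refine irrationality_measure_alpha_7_general (S := 46) (P := 11) (by norm_num) (by norm_num)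
    (by norm_num) ?_ ?_
  · exact_mod_cast IrrationalityMeasure.exp_one_mul_sqrt_sub_lt_one
  · exact_mod_cast IrrationalityMeasure.log_div_log_lt.trans hκ
end

section
/- The number α₁₂ = √25 · ln((√25 − 1)/(√25 + 1)) = 5 ln(2/3) has irrationality measure at most 3.43507; that is, for every real κ > 3.43507, there exist only finitely many pairs (p, q) with p ∈ ℤ and q a positive integer such that |α₁₂ − p/q| < q^(−κ). -/
/-!
Put `I n = ∫ t in 2..3, ((t - 2) * (3 - t)) ^ (15 * n) / t ^ (14 * n + 1)`. Expanding the numerator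
in powers of `t` makes `I n` a linear form in `1` and `log (3 / 2)` with rational coefficients. As
`6` divides `(6 * t - 2) * (3 - 6 * t)`, the coefficient of `t ^ k` is divisible by
`6 ^ (15 * n - k)`, which cancels the negative powers of `2` and `3`, so that the denominators
divide `lcm (1, …, 16 n)`. They are smaller still: if a multiple `p * i` of a prime `p > 2 n` lies
in `(14 n, 15 n]`, the Frobenius modulo `p` shows that `p` divides every coefficient which the
integration would divide by a multiple of `p`. By the prime number theorem, which is proved by the
Wiener–Ikehara method, removing these primes for `i ≤ 7` leaves a denominator `D n` of size
`exp ((16 - ∑ i ≤ 7, 1 / i) n + o(n))`.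

The forms `D n * I n` thus decay at least like `(2 * 10⁻⁹) ^ n`, while the ratio of the coefficient
of `log (3 / 2)` to the form is at most about `(5 / 7 * 10³⁰) ^ n`. Comparing such forms with an
approximation `p / q` bounds the irrationality measure by the quotient of the logarithms,
`log (5 / 7 * 10³⁰) / log (10⁹ / 2) < 103 / 30`.
-/

open Filter Topology MeasureTheory

section IrrationalityMeasure

/-- The irrationality measure of `α` is at most `c`: for every `κ > c`, only finitely many pairs
`(p, q)` satisfy `|α - p / q| < q ^ (-κ)`. Pairs are counted, so `p / q` need not be reduced. -/
def IrrationalityMeasureLE (α c : ℝ) : Prop :=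
  ∀ κ : ℝ, κ > c →
    {pq : ℤ × ℕ+ | |α - (pq.1 : ℝ) / ((pq.2 : ℕ) : ℝ)| < ((pq.2 : ℕ) : ℝ) ^ (-κ)}.Finite

lemma finite_int_abs_sub_div_lt (α y : ℝ) {q : ℕ} (hq : 0 < q) :
    {p : ℤ | |α - p / q| < y}.Finite := by
  have hq' : (0 : ℝ) < q := by exact_mod_cast hq
  refine (Set.finite_Icc ⌊q * (α - y)⌋ ⌈q * (α + y)⌉).subset fun p hp => ?_
  obtain ⟨hlow, hupp⟩ := abs_lt.mp hp.out
  have hp_lt : (p : ℝ) < q * (α + y) := by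
    rw [← div_lt_iff₀' hq']; linarith
  have hp_gt : q * (α - y) < (p : ℝ) := by
    rw [← lt_div_iff₀' hq']; linarith
  constructor
  · exact_mod_cast (Int.floor_le _).trans hp_gt.le
  · exact_mod_cast hp_lt.le.trans (Int.le_ceil _)

lemma irrationalityMeasureLE_iff_eventually {α c : ℝ} :
    IrrationalityMeasureLE α c ↔
      ∀ κ > c, ∀ᶠ q : ℕ in atTop, ∀ p : ℤ, (q : ℝ) ^ (-κ) ≤ |α - p / q| := by
  refine forall₂_congr fun κ _ => ⟨fun h => ?_, fun h => ?_⟩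
  · obtain ⟨Q, hQ⟩ := (h.image fun pq => (pq.2 : ℕ)).bddAbove
    filter_upwards [eventually_gt_atTop Q, eventually_gt_atTop 0] with q hq hq0 p
    by_contra! hlt
    exact hq.not_ge (hQ ⟨(p, ⟨q, hq0⟩), hlt, rfl⟩)
  · obtain ⟨Q, hQ⟩ := eventually_atTop.mp h
    have hfib (q : ℕ+) : {p : ℤ | |α - p / (q : ℕ)| < ((q : ℕ) : ℝ) ^ (-κ)}.Finite :=
      finite_int_abs_sub_div_lt α _ q.pos
    refine (((Set.finite_Iio Q).preimage PNat.coe_injective.injOn).biUnion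
      fun q _ => (hfib q).image fun p => (p, q)).subset ?_
    rintro ⟨p, q⟩ hpq
    simp only [Set.mem_iUnion, Set.mem_image, Set.mem_ofPred_eq, Set.mem_preimage, Set.mem_Iio]
    exact ⟨q, not_le.mp fun hle => (hQ q hle p).not_gt hpq.out, p, hpq, rfl⟩

lemma eventually_lt_natCast_rpow (K : ℝ) {y : ℝ} (hy : 0 < y) :
    ∀ᶠ q : ℕ in atTop, K < (q : ℝ) ^ y :=
  ((tendsto_rpow_atTop hy).comp tendsto_natCast_atTop_atTop).eventually_gt_atTop K

lemma IrrationalityMeasureLE.ratCast_mul {α c : ℝ} (hα : IrrationalityMeasureLE α c) {r : ℚ}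
    (hr : r ≠ 0) : IrrationalityMeasureLE (r * α) c := by
  rw [irrationalityMeasureLE_iff_eventually] at hα ⊢
  intro κ hκ
  obtain ⟨κ', hcκ', hκ'κ⟩ := exists_between hκ
  set u := r.num.natAbs ^ 2 with hu
  have hnum : r.num ≠ 0 := Rat.num_ne_zero.mpr hr
  have hu0 : 0 < u := pow_pos (Int.natAbs_pos.mpr hnum) 2
  have hr' : (r : ℝ) ≠ 0 := Rat.cast_ne_zero.mpr hr
  filter_upwards [(tendsto_id.atTop_mul_const' hu0).eventually (hα κ' hcκ'),
    eventually_lt_natCast_rpow ((u : ℝ) ^ κ' / |(r : ℝ)|) (sub_pos.mpr hκ'κ),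
    eventually_gt_atTop 0] with q happrox hlarge hq p
  have hq : (0 : ℝ) < q := by exact_mod_cast hq
  have hu0 : (0 : ℝ) < u := by exact_mod_cast hu0
  have hfrac : ((p * r.den * r.num : ℤ) / (q * u : ℕ) : ℝ) = p / q / r := by
    have hnum' : (r.num : ℝ) ≠ 0 := Int.cast_ne_zero.mpr hnum
    have hu' : (u : ℝ) = (r.num : ℝ) ^ 2 := by rw [hu, Nat.cast_pow, Nat.cast_natAbs]; simp
    rw [Rat.cast_def]
    push_cast
    rw [hu']
    field_simp
  calc (q : ℝ) ^ (-κ) = (q : ℝ) ^ (-κ') / (q : ℝ) ^ (κ - κ') := by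
        rw [← Real.rpow_sub hq]; ring_nf
    _ ≤ (q : ℝ) ^ (-κ') / ((u : ℝ) ^ κ' / |(r : ℝ)|) := by gcongr
    _ = |(r : ℝ)| * ((q * u : ℕ) : ℝ) ^ (-κ') := by
        push_cast
        rw [Real.mul_rpow hq.le hu0.le, Real.rpow_neg hu0.le, div_div_eq_mul_div]
        ring
    _ ≤ |(r : ℝ)| * |α - p / q / r| := by
        rw [← hfrac]
        gcongr
        exact happrox _
    _ = |r * α - p / q| := by rw [← abs_mul, mul_sub, mul_div_cancel₀ _ hr']

lemma irrationalityMeasureLE_of_eventually_one_le {α c K : ℝ}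
    (h : ∀ᶠ q : ℕ in atTop, ∀ p : ℤ, 1 ≤ K * (q : ℝ) ^ c * |α - p / q|) :
    IrrationalityMeasureLE α c := by
  refine irrationalityMeasureLE_iff_eventually.mpr fun κ hκ => ?_
  filter_upwards [h, eventually_lt_natCast_rpow K (sub_pos.mpr hκ), eventually_gt_atTop 0]
    with q hone hK hq p
  have hq : (0 : ℝ) < q := by exact_mod_cast hq
  calc (q : ℝ) ^ (-κ) ≤ (q : ℝ) ^ (-κ) * (K * (q : ℝ) ^ c * |α - p / q|) :=
        le_mul_of_one_le_right (by positivity) (hone p)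
    _ ≤ (q : ℝ) ^ (-κ) * ((q : ℝ) ^ (κ - c) * (q : ℝ) ^ c * |α - p / q|) := by gcongr
    _ = |α - p / q| := by
      rw [← Real.rpow_add hq, sub_add_cancel, ← mul_assoc, ← Real.rpow_add hq, neg_add_cancel,
        Real.rpow_zero, one_mul]

lemma one_le_mul_abs_sub_div {α T : ℝ} {a b p : ℤ} {q : ℕ} (hq : 0 < q)
    (hpos : 0 < |b * α - a|) (hsmall : 2 * q * |b * α - a| ≤ 1)
    (hb : |(b : ℝ)| ≤ T * |b * α - a|) :
    1 ≤ T * |α - p / q| := by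
  have hq' : (0 : ℝ) < q := by exact_mod_cast hq
  have hscaled : |(b : ℝ)| * |α - p / q| ≤ T * |b * α - a| * |α - p / q| := by gcongr
  suffices hsuff : |(b : ℝ) * α - a| ≤ |(b : ℝ)| * |α - p / q| by
    have : |(b : ℝ) * α - a| * 1 ≤ |(b : ℝ) * α - a| * (T * |α - p / q|) := by linarith
    exact le_of_mul_le_mul_left this hpos
  rw [← abs_mul]
  rcases eq_or_ne (q * a - p * b) 0 with hz | hz
  · have hz' : (q : ℝ) * a = p * b := by exact_mod_cast sub_eq_zero.mp hz
    refine le_of_eq (congrArg abs ?_)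
    field_simp
    linear_combination -hz'
  · have hone : (1 : ℝ) ≤ |(q : ℝ) * a - p * b| := by exact_mod_cast Int.one_le_abs hz
    have hsplit : (q : ℝ) * a - p * b = q * (b * (α - p / q)) - q * (b * α - a) := by
      field_simp; ring
    have htri := abs_sub (q * (b * (α - p / q))) (q * (b * α - a))
    rw [← hsplit, abs_mul (q : ℝ), abs_mul (q : ℝ), abs_of_pos hq'] at htri
    refine le_of_mul_le_mul_left (a := (q : ℝ)) ?_ hq'
    linarith

lemma pow_succ_le_rpow_neg_mul_rpow {c s R x : ℝ} {n : ℕ} (hs : 0 < s) (hc : 0 ≤ c) (hR : 0 ≤ R)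
    (hRs : R * s ^ c ≤ 1) (hx : (s ^ n)⁻¹ ≤ x) : R ^ (n + 1) ≤ s ^ (-c) * x ^ c := by
  have hRle : R ≤ s ^ (-c) := by
    rw [Real.rpow_neg hs.le]
    exact ((le_mul_inv_iff₀ (by positivity)).mpr hRs).trans_eq (one_mul _)
  calc R ^ (n + 1) ≤ (s ^ (-c)) ^ (n + 1) := by gcongr
    _ = s ^ (-c) * ((s ^ n)⁻¹) ^ c := by
      rw [pow_succ', Real.inv_rpow (by positivity), ← Real.rpow_natCast, ← Real.rpow_natCast,
        ← Real.rpow_mul hs.le, ← Real.rpow_mul hs.le, ← Real.rpow_neg hs.le]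
      ring_nf
    _ ≤ s ^ (-c) * x ^ c := by gcongr

lemma irrationalityMeasureLE_of_linearForms {α c s R C : ℝ} {a b : ℕ → ℤ}
    (hs0 : 0 < s) (hs1 : s < 1) (hc : 0 ≤ c) (hR : 0 ≤ R) (hRs : R * s ^ c ≤ 1) (hC : 0 < C)
    (h : ∀ᶠ n in atTop, 0 < |b n * α - a n| ∧ |b n * α - a n| ≤ C * s ^ n ∧
      |(b n : ℝ)| ≤ C * R ^ n * |b n * α - a n|) :
    IrrationalityMeasureLE α c := by
  obtain ⟨N, hN⟩ := eventually_atTop.mp h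
  have hlarge : ∀ᶠ q : ℕ in atTop, max 1 (1 / s ^ N) ≤ 2 * C * q :=
    (tendsto_natCast_atTop_atTop.const_mul_atTop (by positivity)).eventually_ge_atTop _
  refine irrationalityMeasureLE_of_eventually_one_le (K := C * (s ^ (-c) * (2 * C) ^ c)) ?_
  filter_upwards [hlarge, eventually_gt_atTop 0] with q hqlarge hq p
  have hq' : (0 : ℝ) < q := by exact_mod_cast hq
  obtain ⟨hq1, hqN⟩ := max_le_iff.mp hqlarge
  obtain ⟨n, hlt, hle⟩ := exists_nat_pow_near_of_lt_one (x := (2 * C * q)⁻¹) (by positivity)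
    (inv_le_one_of_one_le₀ hq1) hs0 hs1
  have hNn : N ≤ n + 1 := by
    have : s ^ (n + 1) ≤ s ^ N :=
      hlt.le.trans (inv_le_of_inv_le₀ (by positivity) (by simpa using hqN))
    exact (pow_le_pow_iff_right_of_lt_one₀ hs0 hs1).mp this
  obtain ⟨hpos, hsmall, hb⟩ := hN (n + 1) hNn
  have hsq : 2 * q * |b (n + 1) * α - a (n + 1)| ≤ 1 := calc
    _ ≤ 2 * q * (C * (2 * C * q)⁻¹) := by gcongr; exact hsmall.trans (by gcongr)
    _ = 1 := by field_simp
  have hgrowth : R ^ (n + 1) ≤ s ^ (-c) * (2 * C * q) ^ c :=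
    pow_succ_le_rpow_neg_mul_rpow hs0 hc hR hRs (inv_le_of_inv_le₀ (by positivity) hle)
  have hdist := one_le_mul_abs_sub_div hq (p := p) hpos hsq hb
  calc 1 ≤ C * R ^ (n + 1) * |α - p / q| := hdist
    _ ≤ C * (s ^ (-c) * (2 * C * q) ^ c) * |α - p / q| := by gcongr
    _ = _ := by rw [Real.mul_rpow (by positivity) hq'.le]; ring

end IrrationalityMeasure

section FejerKernel

/-- The triangle function, supported on `[-1, 1]`: the Fourier transform of the Fejér kernel. -/
def triangle (v : ℝ) : ℝ := max (1 - |v|) 0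

/-- The Fejér kernel `(sin (u / 2) / (u / 2)) ^ 2`, normalised to take the value `1` at `0`. -/
noncomputable def fejerKernel (u : ℝ) : ℝ := Real.sinc (u / 2) ^ 2

lemma continuous_triangle : Continuous triangle := by
  unfold triangle; fun_prop

lemma triangle_nonneg (v : ℝ) : 0 ≤ triangle v := le_max_right _ _

lemma triangle_of_abs_le_one {v : ℝ} (hv : |v| ≤ 1) : triangle v = 1 - |v| :=
  max_eq_left (sub_nonneg.mpr hv)

lemma triangle_of_one_le_abs {v : ℝ} (hv : 1 ≤ |v|) : triangle v = 0 :=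
  max_eq_right (sub_nonpos.mpr hv)

lemma triangle_of_notMem_Icc {v : ℝ} (hv : v ∉ Set.Icc (-1) 1) : triangle v = 0 :=
  triangle_of_one_le_abs (le_of_not_ge fun h => hv (abs_le.mp h))

lemma integrable_triangle : Integrable triangle :=
  continuous_triangle.integrable_of_hasCompactSupport <|
    HasCompactSupport.intro isCompact_Icc fun _ => triangle_of_notMem_Icc

lemma continuous_fejerKernel : Continuous fejerKernel := by
  have := Real.continuous_sinc
  unfold fejerKernel; fun_prop

lemma fejerKernel_zero : fejerKernel 0 = 1 := by
  simp [fejerKernel]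

lemma fejerKernel_nonneg (u : ℝ) : 0 ≤ fejerKernel u := sq_nonneg _

lemma fejerKernel_of_ne_zero {u : ℝ} (hu : u ≠ 0) :
    fejerKernel u = 2 * (1 - Real.cos u) / u ^ 2 := by
  rw [fejerKernel, Real.sinc_of_ne_zero (by simpa using hu), div_pow, Real.sin_sq_eq_half_sub,
    mul_div_cancel₀ u two_ne_zero]
  field_simp

lemma fejerKernel_le (u : ℝ) : fejerKernel u ≤ 5 * (1 + u ^ 2)⁻¹ := by
  rw [← div_eq_mul_inv, le_div_iff₀ (by positivity)]
  have hle_one : fejerKernel u ≤ 1 := (sq_le_one_iff_abs_le_one _).mpr (Real.abs_sinc_le_one _)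
  have hdecay : fejerKernel u * u ^ 2 ≤ 4 := by
    rcases eq_or_ne u 0 with rfl | hu
    · simp
    · rw [fejerKernel_of_ne_zero hu, div_mul_cancel₀ _ (by positivity)]
      linarith [Real.neg_one_le_cos u]
  linarith

lemma integrable_fejerKernel : Integrable fejerKernel :=
  (integrable_inv_one_add_sq.const_mul 5).mono' continuous_fejerKernel.aestronglyMeasurable <|
    Eventually.of_forall fun u => by
      rw [Real.norm_of_nonneg (fejerKernel_nonneg u)]
      exact fejerKernel_le u

lemma integral_fejerKernel_pos : 0 < ∫ u, fejerKernel u :=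
  integral_pos_of_integrable_nonneg_nonzero continuous_fejerKernel integrable_fejerKernel
    fejerKernel_nonneg (x := 0) (by simp [fejerKernel_zero])

lemma integral_one_sub_mul_two_cos (u : ℝ) :
    ∫ v in (0 : ℝ)..1, (1 - v) * (2 * Real.cos (u * v)) = fejerKernel u := by
  rcases eq_or_ne u 0 with rfl | hu
  · have hderiv (v : ℝ) : HasDerivAt (fun v => 2 * v - v ^ 2) ((1 - v) * 2) v := by
      exact (((hasDerivAt_id v).const_mul 2).sub (hasDerivAt_pow 2 v)).congr_deriv (by
        norm_num; ring)
    simp only [zero_mul, Real.cos_zero, mul_one, fejerKernel_zero]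
    rw [intervalIntegral.integral_eq_sub_of_hasDerivAt (fun v _ => hderiv v)
      (by apply Continuous.intervalIntegrable; fun_prop)]
    norm_num
  · have hderiv (v : ℝ) : HasDerivAt
        (fun v => 2 * ((1 - v) * Real.sin (u * v) / u - Real.cos (u * v) / u ^ 2))
        ((1 - v) * (2 * Real.cos (u * v))) v := by
      have hlin := (hasDerivAt_id v).const_mul u
      exact ((((((hasDerivAt_id v).const_sub 1).mul hlin.sin).div_const u).sub
        (hlin.cos.div_const (u ^ 2))).const_mul 2).congr_deriv (by
          simp only [id]; field_simp; ring)
    rw [intervalIntegral.integral_eq_sub_of_hasDerivAt (fun v _ => hderiv v)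
      (by apply Continuous.intervalIntegrable; fun_prop), fejerKernel_of_ne_zero hu]
    simp only [mul_one, mul_zero, Real.sin_zero, Real.cos_zero]
    field_simp
    ring

lemma integral_triangle_mul_cexp (u : ℝ) :
    ∫ v : ℝ, (triangle v : ℂ) * Complex.exp (u * v * Complex.I) = fejerKernel u := by
  set f : ℝ → ℂ := fun v => (triangle v : ℂ) * Complex.exp (u * v * Complex.I) with hf
  have hcont : Continuous f := by
    have := continuous_triangle
    fun_prop
  have hint (a b : ℝ) : IntervalIntegrable f volume a b := hcont.intervalIntegrable a b
  have hsupp : ∫ v, f v = ∫ v in (-1 : ℝ)..1, f v := by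
    rw [intervalIntegral.integral_of_le (by norm_num), ← integral_Icc_eq_integral_Ioc]
    refine (setIntegral_eq_integral_of_forall_compl_eq_zero fun v hv => ?_).symm
    simp [hf, triangle_of_notMem_Icc hv]
  have hfold : ∫ v in (-1 : ℝ)..0, f v = ∫ v in (0 : ℝ)..1, f (-v) := by
    simp [intervalIntegral.integral_comp_neg]
  rw [hsupp, ← intervalIntegral.integral_add_adjacent_intervals (hint (-1) 0) (hint 0 1), hfold,
    ← intervalIntegral.integral_add (by apply Continuous.intervalIntegrable; fun_prop) (hint 0 1),
    ← integral_one_sub_mul_two_cos, ← intervalIntegral.integral_ofReal]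
  refine intervalIntegral.integral_congr fun v hv => ?_
  rw [Set.uIcc_of_le zero_le_one] at hv
  have habs : |v| = v := abs_of_nonneg hv.1
  have htri : triangle v = 1 - v := by
    rw [triangle_of_abs_le_one (habs.trans_le hv.2), habs]
  have htri_neg : triangle (-v) = 1 - v := by
    rw [triangle_of_abs_le_one (by rw [abs_neg, habs]; exact hv.2), abs_neg, habs]
  simp only [hf, htri, htri_neg]
  push_cast
  rw [Complex.two_cos]
  ring_nf

end FejerKernel

/-- `F : ℝ → ℝ` is bounded, measurable and vanishes on the negative half-line, and its Laplace
transform, defined on `0 < re z`, is given there by a function `H` continuous on `0 ≤ re z`. -/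
structure HasLaplaceExtension (F : ℝ → ℝ) (H : ℂ → ℂ) : Prop where
  measurable : Measurable F
  bounded : ∃ C, ∀ t, |F t| ≤ C
  eq_zero_of_nonpos : ∀ t ≤ 0, F t = 0
  continuousOn : ContinuousOn H {z | 0 ≤ z.re}
  integral_eq : ∀ z : ℂ, 0 < z.re → ∫ t : ℝ, (F t : ℂ) * Complex.exp (-z * t) = H z

namespace HasLaplaceExtension

variable {F : ℝ → ℝ} {H : ℂ → ℂ}

lemma neg (h : HasLaplaceExtension F H) : HasLaplaceExtension (fun t => -F t) (fun z => -H z) where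
  measurable := h.measurable.neg
  bounded := by simpa only [abs_neg] using h.bounded
  eq_zero_of_nonpos t ht := by rw [h.eq_zero_of_nonpos t ht, neg_zero]
  continuousOn := h.continuousOn.neg
  integral_eq z hz := by
    simp only [Complex.ofReal_neg, neg_mul (F _ : ℂ), integral_neg, h.integral_eq z hz]

lemma comp_div (h : HasLaplaceExtension F H) {l : ℝ} (hl : 0 < l) :
    HasLaplaceExtension (fun t => F (t / l)) (fun z => l * H (l * z)) where
  measurable := h.measurable.comp (measurable_id.div_const l)
  bounded := h.bounded.imp fun _ hC t => hC (t / l)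
  eq_zero_of_nonpos t ht := h.eq_zero_of_nonpos _ (div_nonpos_of_nonpos_of_nonneg ht hl.le)
  continuousOn := continuousOn_const.mul <| h.continuousOn.comp (by fun_prop) fun z hz => by
    simpa using mul_nonneg hl.le hz.out
  integral_eq z hz := by
    have hscale := Measure.integral_comp_div (fun t : ℝ => (F t : ℂ) * Complex.exp (-(l * z) * t)) l
    rw [h.integral_eq (l * z) (by simpa using mul_pos hl hz), abs_of_pos hl,
      Complex.real_smul] at hscale
    rw [← hscale]
    have hl' : (l : ℂ) ≠ 0 := by exact_mod_cast hl.ne'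
    refine integral_congr_ae (Eventually.of_forall fun t => ?_)
    simp only [Complex.ofReal_div]
    congr 2
    field_simp

lemma integrable_mul_cexp (h : HasLaplaceExtension F H) {z : ℂ} (hz : 0 < z.re) :
    Integrable fun t : ℝ => (F t : ℂ) * Complex.exp (-z * t) := by
  obtain ⟨C, hC⟩ := h.bounded
  have hexp : Integrable ((Set.Ioi (0 : ℝ)).indicator fun t : ℝ => Complex.exp (-z * t)) :=
    (integrable_indicator_iff measurableSet_Ioi).mpr
      (integrableOn_exp_mul_complex_Ioi (by simpa using hz) 0)
  have hprod := hexp.bdd_mul (c := C) (f := fun t => (F t : ℂ))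
    (Complex.measurable_ofReal.comp h.measurable).aestronglyMeasurable
    (Eventually.of_forall fun t => by rw [Complex.norm_real]; exact hC t)
  refine hprod.congr (Eventually.of_forall fun t => ?_)
  rcases le_or_gt t 0 with ht | ht
  · simp [h.eq_zero_of_nonpos t ht]
  · simp [ht]

lemma integral_mul_cexp_mul_fejerKernel (h : HasLaplaceExtension F H) {s : ℝ} (hs : 0 < s)
    (x : ℝ) :
    ∫ t : ℝ, (F t : ℂ) * Complex.exp (-s * t) * fejerKernel (t - x) =
      ∫ v : ℝ, triangle v * Complex.exp (-(x * v) * Complex.I) * H (s - v * Complex.I) := by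
  have hint : Integrable (Function.uncurry fun (t v : ℝ) => (F t : ℂ) * Complex.exp (-s * t) *
      ((triangle v : ℂ) * Complex.exp ((t - x : ℝ) * v * Complex.I))) (volume.prod volume) := by
    have hprod := (h.integrable_mul_cexp (z := s) (by simpa using hs)).mul_prod
      (integrable_triangle.ofReal (𝕜 := ℂ))
    have hosc := hprod.bdd_mul (c := 1)
      (f := fun z : ℝ × ℝ => Complex.exp ((z.1 - x : ℝ) * z.2 * Complex.I))
      (by apply Continuous.aestronglyMeasurable; fun_prop)
      (Eventually.of_forall fun z => by rw [← Complex.ofReal_mul, Complex.norm_exp_ofReal_mul_I])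
    refine hosc.congr (Eventually.of_forall fun z => ?_)
    simp only [Function.uncurry, Complex.coe_algebraMap]
    ring
  calc _ = ∫ t : ℝ, ∫ v : ℝ, (F t : ℂ) * Complex.exp (-s * t) *
          ((triangle v : ℂ) * Complex.exp ((t - x : ℝ) * v * Complex.I)) := by
        simp only [integral_const_mul, integral_triangle_mul_cexp]
    _ = ∫ v : ℝ, ∫ t : ℝ, (F t : ℂ) * Complex.exp (-s * t) *
          ((triangle v : ℂ) * Complex.exp ((t - x : ℝ) * v * Complex.I)) :=
        integral_integral_swap hint
    _ = _ := by
        refine integral_congr_ae (Eventually.of_forall fun v => ?_)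
        simp only
        rw [← h.integral_eq (s - v * Complex.I) (by simpa using hs), ← integral_const_mul]
        refine integral_congr_ae (Eventually.of_forall fun t => ?_)
        have hexp : Complex.exp (-s * t) * Complex.exp ((t - x : ℝ) * v * Complex.I) =
            Complex.exp (-(x * v) * Complex.I) * Complex.exp (-(s - v * Complex.I) * t) := by
          rw [← Complex.exp_add, ← Complex.exp_add]
          push_cast
          ring_nf
        linear_combination (F t : ℂ) * triangle v * hexp

lemma tendsto_integral_mul_cexp_mul_fejerKernel (h : HasLaplaceExtension F H) (x : ℝ) :
    Tendsto (fun s : ℝ => ∫ t : ℝ, (F t : ℂ) * Complex.exp (-s * t) * fejerKernel (t - x))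
      (𝓝[>] 0) (𝓝 (∫ t : ℝ, (F t : ℂ) * fejerKernel (t - x))) := by
  obtain ⟨C, hC⟩ := h.bounded
  refine tendsto_integral_filter_of_dominated_convergence
    (fun t => C * fejerKernel (t - x)) (Eventually.of_forall fun s => ?_) ?_
    ((integrable_fejerKernel.comp_sub_right x).const_mul C) (Eventually.of_forall fun t => ?_)
  · have hF := Complex.measurable_ofReal.comp h.measurable
    have hK : Measurable fun t => (fejerKernel (t - x) : ℂ) :=
      (Complex.continuous_ofReal.comp (continuous_fejerKernel.comp (by fun_prop))).measurable
    exact ((hF.mul (by fun_prop)).mul hK).aestronglyMeasurable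
  · filter_upwards [self_mem_nhdsWithin] with s (hs : 0 < s)
    refine Eventually.of_forall fun t => ?_
    rw [norm_mul, norm_mul, Complex.norm_real, Complex.norm_real,
      Real.norm_of_nonneg (fejerKernel_nonneg _)]
    refine mul_le_mul_of_nonneg_right ?_ (fejerKernel_nonneg _)
    rcases le_or_gt t 0 with ht | ht
    · simpa [h.eq_zero_of_nonpos t ht] using (abs_nonneg _).trans (hC 0)
    · have hexp : ‖Complex.exp (-s * t)‖ ≤ 1 := by
        rw [Complex.norm_exp, Real.exp_le_one_iff]
        simpa using (mul_pos hs ht).le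
      calc ‖F t‖ * ‖Complex.exp (-s * t)‖ ≤ ‖F t‖ * 1 := by gcongr
        _ ≤ C := by rw [mul_one]; exact hC t
  · have hexp : Continuous fun s : ℝ =>
        (F t : ℂ) * Complex.exp (-s * t) * fejerKernel (t - x) := by fun_prop
    simpa using (hexp.tendsto 0).mono_left nhdsWithin_le_nhds

lemma continuous_boundary (h : HasLaplaceExtension F H) {s : ℝ} (hs : 0 ≤ s) :
    Continuous fun v : ℝ => H (s - v * Complex.I) :=
  h.continuousOn.comp_continuous (by fun_prop) fun v => by simpa using hs

lemma tendsto_integral_triangle_mul (h : HasLaplaceExtension F H) (x : ℝ) :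
    Tendsto (fun s : ℝ =>
        ∫ v : ℝ, triangle v * Complex.exp (-(x * v) * Complex.I) * H (s - v * Complex.I))
      (𝓝[>] 0)
      (𝓝 (∫ v : ℝ, triangle v * Complex.exp (-(x * v) * Complex.I) * H (-v * Complex.I))) := by
  obtain ⟨M, hM⟩ := ((isCompact_Icc (a := (0 : ℝ)) (b := 1)).reProdIm
    (isCompact_Icc (a := (-1 : ℝ)) (b := 1))).exists_bound_of_continuousOn
    (h.continuousOn.mono fun z hz => (Complex.mem_reProdIm.mp hz).1.1)
  refine tendsto_integral_filter_of_dominated_convergence (fun v => triangle v * M) ?_ ?_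
    (integrable_triangle.mul_const M) (Eventually.of_forall fun v => ?_)
  · filter_upwards [self_mem_nhdsWithin] with s (hs : 0 < s)
    have hT := continuous_triangle
    exact (Continuous.mul (by fun_prop) (h.continuous_boundary hs.le)).aestronglyMeasurable
  · filter_upwards [Ioo_mem_nhdsGT one_pos] with s hs
    refine Eventually.of_forall fun v => ?_
    have hosc : ‖Complex.exp (-(x * v) * Complex.I)‖ = 1 := by
      exact_mod_cast Complex.norm_exp_ofReal_mul_I (-(x * v))
    rw [norm_mul, norm_mul, hosc, mul_one, Complex.norm_real,
      Real.norm_of_nonneg (triangle_nonneg v)]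
    by_cases hv : v ∈ Set.Icc (-1) 1
    · refine mul_le_mul_of_nonneg_left (hM _ (Complex.mem_reProdIm.mpr ?_)) (triangle_nonneg v)
      simpa using ⟨⟨hs.1.le, hs.2.le⟩, hv.2, neg_le.mp hv.1⟩
    · simp [triangle_of_notMem_Icc hv]
  · refine Tendsto.const_mul _ ?_
    have hmaps : Tendsto (fun s : ℝ => (s : ℂ) - v * Complex.I) (𝓝[>] 0)
        (𝓝[{z | 0 ≤ z.re}] (-v * Complex.I)) := by
      refine tendsto_nhdsWithin_iff.mpr ⟨?_, ?_⟩
      · have hcont : Continuous fun s : ℝ => (s : ℂ) - v * Complex.I := by fun_prop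
        simpa using (hcont.tendsto 0).mono_left nhdsWithin_le_nhds
      · filter_upwards [self_mem_nhdsWithin] with s (hs : 0 < s)
        simpa using hs.le
    exact (h.continuousOn (-v * Complex.I) (by simp)).tendsto.comp hmaps

lemma integral_mul_fejerKernel (h : HasLaplaceExtension F H) (x : ℝ) :
    ∫ t : ℝ, (F t : ℂ) * fejerKernel (t - x) =
      ∫ v : ℝ, triangle v * Complex.exp (-(x * v) * Complex.I) * H (-v * Complex.I) := by
  refine tendsto_nhds_unique (h.tendsto_integral_mul_cexp_mul_fejerKernel x)
    ((h.tendsto_integral_triangle_mul x).congr' ?_)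
  filter_upwards [self_mem_nhdsWithin] with s (hs : 0 < s)
  exact (h.integral_mul_cexp_mul_fejerKernel hs x).symm

lemma tendsto_integral_add_mul_fejerKernel (h : HasLaplaceExtension F H) :
    Tendsto (fun x => ∫ u, F (x + u) * fejerKernel u) atTop (𝓝 0) := by
  have hfreq : Tendsto (fun x : ℝ => x / (2 * Real.pi)) atTop (cocompact ℝ) :=
    (tendsto_id.atTop_div_const (by positivity)).mono_right atTop_le_cocompact
  have hRL := (Real.tendsto_integral_exp_smul_cocompact
    fun v : ℝ => (triangle v : ℂ) * H (-v * Complex.I)).comp hfreq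
  have hcomplex : Tendsto (fun x => ((∫ u, F (x + u) * fejerKernel u : ℝ) : ℂ)) atTop (𝓝 0) := by
    refine hRL.congr fun x => ?_
    have hshift : ((∫ u, F (x + u) * fejerKernel u : ℝ) : ℂ) =
        ∫ t : ℝ, (F t : ℂ) * fejerKernel (t - x) := by
      rw [← integral_complex_ofReal,
        ← integral_add_left_eq_self (fun t : ℝ => (F t : ℂ) * fejerKernel (t - x)) x]
      simp
    rw [hshift, h.integral_mul_fejerKernel x]
    refine integral_congr_ae (Eventually.of_forall fun v => ?_)
    have hphase : ((2 * Real.pi * -(v * (x / (2 * Real.pi))) : ℝ) : ℂ) = -(x * v) := by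
      push_cast
      field_simp
    simp only [Circle.smul_def, Real.fourierChar_apply, smul_eq_mul, hphase]
    ring
  simpa [Function.comp_def] using (Complex.continuous_re.tendsto 0).comp hcomplex

lemma tendsto_integral_add_div_mul_fejerKernel (h : HasLaplaceExtension F H) {l : ℝ} (hl : 0 < l) :
    Tendsto (fun x => ∫ u, F (x + u / l) * fejerKernel u) atTop (𝓝 0) := by
  refine ((h.comp_div hl).tendsto_integral_add_mul_fejerKernel.comp
    (tendsto_id.const_mul_atTop hl)).congr fun x => ?_
  simp only [Function.comp_apply, id, add_div, mul_div_cancel_left₀ x hl.ne']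

end HasLaplaceExtension

lemma le_integral_mul_of_le_on {X : Type*} [MeasurableSpace X] {μ : Measure X} {S : Set X}
    {g K : X → ℝ} {e C : ℝ} (hS : MeasurableSet S) (hK : Integrable K μ) (hK0 : ∀ u, 0 ≤ K u)
    (hgK : Integrable (fun u => g u * K u) μ) (hgS : ∀ u ∈ S, e ≤ g u) (hg : ∀ u, -C ≤ g u) :
    e * ∫ u in S, K u ∂μ - C * ∫ u in Sᶜ, K u ∂μ ≤ ∫ u, g u * K u ∂μ := by
  have hon : e * ∫ u in S, K u ∂μ ≤ ∫ u in S, g u * K u ∂μ := by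
    rw [← integral_const_mul]
    exact setIntegral_mono_on (hK.integrableOn.const_mul e) hgK.integrableOn hS fun u hu =>
      mul_le_mul_of_nonneg_right (hgS u hu) (hK0 u)
  have hoff : -C * ∫ u in Sᶜ, K u ∂μ ≤ ∫ u in Sᶜ, g u * K u ∂μ := by
    rw [← integral_const_mul]
    exact integral_mono (hK.integrableOn.const_mul (-C)) hgK.integrableOn fun u =>
      mul_le_mul_of_nonneg_right (hg u) (hK0 u)
  rw [← integral_add_compl hS hgK]
  linarith

lemma exists_pos_lt_mul_integral_fejerKernel (C : ℝ) {e : ℝ} (he : 0 < e) :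
    ∃ R > 0, 0 < e * (∫ u in Set.Ioc (-R) R, fejerKernel u) -
      C * ∫ u in (Set.Ioc (-R) R)ᶜ, fejerKernel u := by
  have hmass : Tendsto (fun R => ∫ u in Set.Ioc (-R) R, fejerKernel u) atTop
      (𝓝 (∫ u, fejerKernel u)) := by
    refine (intervalIntegral_tendsto_integral integrable_fejerKernel
      tendsto_neg_atTop_atBot tendsto_id).congr' ?_
    filter_upwards [eventually_ge_atTop 0] with R hR
    exact intervalIntegral.integral_of_le (neg_le_self hR)
  have hlim := (hmass.const_mul e).sub ((hmass.const_sub (∫ u, fejerKernel u)).const_mul C)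
  simp only [sub_self, mul_zero, sub_zero] at hlim
  obtain ⟨R, hRpos, hR⟩ := ((eventually_gt_atTop 0).and
    (hlim.eventually_const_lt (mul_pos he integral_fejerKernel_pos))).exists
  refine ⟨R, hRpos, ?_⟩
  rwa [setIntegral_compl measurableSet_Ioc integrable_fejerKernel]

namespace HasLaplaceExtension

variable {F : ℝ → ℝ} {H : ℂ → ℂ}

-- If `F ≥ e` on the whole window, the Fejér mean of `F` at scale `δ` would stay away from `0`.
lemma eventually_exists_lt (h : HasLaplaceExtension F H) {e δ : ℝ} (he : 0 < e) (hδ : 0 < δ) :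
    ∀ᶠ x in atTop, ∃ w ∈ Set.Icc (-δ) δ, F (x + w) < e := by
  obtain ⟨C, hC⟩ := h.bounded
  obtain ⟨R, hR, hpos⟩ := exists_pos_lt_mul_integral_fejerKernel C he
  have hl : 0 < R / δ := by positivity
  filter_upwards [(h.tendsto_integral_add_div_mul_fejerKernel hl).eventually_lt_const hpos]
    with x hx
  by_contra! hwindow
  refine hx.not_ge (le_integral_mul_of_le_on measurableSet_Ioc integrable_fejerKernel
    fejerKernel_nonneg ?_ (fun u hu => hwindow _ ?_) fun u => (abs_le.mp (hC _)).1)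
  · exact integrable_fejerKernel.bdd_mul (c := C)
      (h.measurable.comp (by fun_prop)).aestronglyMeasurable (Eventually.of_forall fun u => hC _)
  · rw [div_div_eq_mul_div, Set.mem_Icc, le_div_iff₀ hR, div_le_iff₀ hR]
    constructor <;> nlinarith [hu.1, hu.2]

theorem tendsto_zero_of_slowlyDecreasing (h : HasLaplaceExtension F H)
    (hslow : ∀ ε > 0, ∃ δ > 0, ∀ᶠ x in atTop, ∀ w ∈ Set.Icc 0 δ, F x - ε ≤ F (x + w)) :
    Tendsto F atTop (𝓝 0) := by
  refine Metric.tendsto_nhds.mpr fun ε hε => ?_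
  obtain ⟨δ, hδ, hdec⟩ := hslow (ε / 2) (by positivity)
  obtain ⟨X, hX⟩ := eventually_atTop.mp hdec
  have hupp := (tendsto_atTop_add_const_right atTop (δ / 2) tendsto_id).eventually
    (h.eventually_exists_lt (half_pos hε) (half_pos hδ))
  have hlow := (tendsto_atTop_add_const_right atTop (-(δ / 2)) tendsto_id).eventually
    (h.neg.eventually_exists_lt (half_pos hε) (half_pos hδ))
  filter_upwards [hupp, hlow, eventually_ge_atTop (X + δ)] with x ⟨w, hw, hFw⟩ ⟨v, hv, hFv⟩ hx
  simp only [id, add_assoc] at hFw hFv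
  have hright := hX x (by linarith) (δ / 2 + w) ⟨by linarith [hw.1], by linarith [hw.2]⟩
  have hleft := hX (x + (-(δ / 2) + v)) (by linarith [hv.1]) (δ / 2 - v)
    ⟨by linarith [hv.2], by linarith [hv.1]⟩
  rw [show x + (-(δ / 2) + v) + (δ / 2 - v) = x by ring] at hleft
  rw [Real.dist_eq, sub_zero, abs_lt]
  constructor <;> linarith

end HasLaplaceExtension

/-- The mean `e ^ (-t) * ∑ k ≤ e ^ t, f k`, in logarithmic scale. -/
noncomputable def expMean (f : ℕ → ℝ) (t : ℝ) : ℝ :=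
  (∑ k ∈ Finset.Icc 1 ⌊Real.exp t⌋₊, f k) * Real.exp (-t)

section WienerIkehara

variable {f : ℕ → ℝ} {C : ℝ}

lemma expMean_log (f : ℕ → ℝ) {x : ℝ} (hx : 0 < x) :
    expMean f (Real.log x) = (∑ k ∈ Finset.Icc 1 ⌊x⌋₊, f k) / x := by
  rw [expMean, Real.exp_neg, Real.exp_log hx, div_eq_mul_inv]

lemma measurable_expMean (f : ℕ → ℝ) : Measurable (expMean f) :=
  ((measurable_from_nat (f := fun n => ∑ k ∈ Finset.Icc 1 n, f k)).comp
    (Nat.measurable_floor.comp Real.measurable_exp)).mul (by fun_prop)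

lemma expMean_nonneg (hf : ∀ n, 0 ≤ f n) (t : ℝ) : 0 ≤ expMean f t :=
  mul_nonneg (Finset.sum_nonneg fun k _ => hf k) (Real.exp_pos _).le

lemma nonneg_of_sum_le (hf : ∀ n, 0 ≤ f n) (hC : ∀ n : ℕ, ∑ k ∈ Finset.Icc 1 n, f k ≤ C * n) :
    0 ≤ C := by
  simpa using (Finset.sum_nonneg fun k _ => hf k).trans (hC 1)

lemma expMean_le (hf : ∀ n, 0 ≤ f n) (hC : ∀ n : ℕ, ∑ k ∈ Finset.Icc 1 n, f k ≤ C * n) (t : ℝ) :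
    expMean f t ≤ C := by
  have hC0 := nonneg_of_sum_le hf hC
  calc expMean f t ≤ C * ⌊Real.exp t⌋₊ * Real.exp (-t) := by unfold expMean; gcongr; exact hC _
    _ ≤ C * Real.exp t * Real.exp (-t) := by gcongr; exact Nat.floor_le (Real.exp_pos t).le
    _ = C := by rw [mul_assoc, ← Real.exp_add, add_neg_cancel, Real.exp_zero, mul_one]

lemma expMean_sub_le (hf : ∀ n, 0 ≤ f n) (hC : ∀ n : ℕ, ∑ k ∈ Finset.Icc 1 n, f k ≤ C * n)
    (x : ℝ) {w : ℝ} (hw : 0 ≤ w) : expMean f x - C * w ≤ expMean f (x + w) := by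
  have hsum : ∑ k ∈ Finset.Icc 1 ⌊Real.exp x⌋₊, f k ≤
      ∑ k ∈ Finset.Icc 1 ⌊Real.exp (x + w)⌋₊, f k :=
    Finset.sum_le_sum_of_subset_of_nonneg
      (Finset.Icc_subset_Icc_right (Nat.floor_mono (Real.exp_le_exp.mpr (by linarith))))
      fun k _ _ => hf k
  calc expMean f x - C * w ≤ expMean f x - expMean f x * w := by
        gcongr; exact expMean_le hf hC x
    _ = expMean f x * (-w + 1) := by ring
    _ ≤ expMean f x * Real.exp (-w) := by
        gcongr
        · exact expMean_nonneg hf x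
        · exact Real.add_one_le_exp (-w)
    _ = (∑ k ∈ Finset.Icc 1 ⌊Real.exp x⌋₊, f k) * Real.exp (-(x + w)) := by
        rw [expMean, mul_assoc, ← Real.exp_add, neg_add]
    _ ≤ expMean f (x + w) := by unfold expMean; gcongr

lemma integrableOn_expMean_mul_cexp (hf : ∀ n, 0 ≤ f n)
    (hC : ∀ n : ℕ, ∑ k ∈ Finset.Icc 1 n, f k ≤ C * n) {z : ℂ} (hz : 0 < z.re) :
    IntegrableOn (fun t : ℝ => (expMean f t : ℂ) * Complex.exp (-z * t)) (Set.Ioi 0) := by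
  refine (integrableOn_exp_mul_complex_Ioi (by simpa using hz) 0).bdd_mul (c := C)
    (Complex.measurable_ofReal.comp (measurable_expMean f)).aestronglyMeasurable
    (Eventually.of_forall fun t => ?_)
  rw [Complex.norm_real, Real.norm_of_nonneg (expMean_nonneg hf t)]
  exact expMean_le hf hC t

lemma LSeries_eq_mul_integral_expMean (hf : ∀ n, 0 ≤ f n)
    (hC : ∀ n : ℕ, ∑ k ∈ Finset.Icc 1 n, f k ≤ C * n) {s : ℂ} (hs : 1 < s.re) :
    LSeries (fun n => f n) s =
      s * ∫ t in Set.Ioi (0 : ℝ), (expMean f t : ℂ) * Complex.exp (-(s - 1) * t) := by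
  have hO : (fun n => ∑ k ∈ Finset.Icc 1 n, f k) =O[atTop] fun n => (n : ℝ) ^ (1 : ℝ) :=
    Asymptotics.IsBigO.of_bound C <| Eventually.of_forall fun n => by
      rw [Real.norm_of_nonneg (Finset.sum_nonneg fun k _ => hf k), Real.rpow_one, Real.norm_natCast]
      exact hC n
  rw [LSeries_eq_mul_integral_of_nonneg f zero_le_one hs hO hf]
  have hsubst := integral_comp_exp_Ioi
    (fun t : ℝ => (∑ k ∈ Finset.Icc 1 ⌊t⌋₊, (f k : ℂ)) * (t : ℂ) ^ (-(s + 1))) 0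
  rw [Real.exp_zero] at hsubst
  rw [← hsubst]
  congr 1
  refine setIntegral_congr_fun measurableSet_Ioi fun t _ => ?_
  have hpow : (Real.exp t : ℂ) * (Real.exp t : ℂ) ^ (-(s + 1)) =
      Real.exp (-t) * Complex.exp (-(s - 1) * t) := by
    rw [Complex.cpow_def_of_ne_zero (by exact_mod_cast (Real.exp_pos t).ne'),
      ← Complex.ofReal_log (Real.exp_pos t).le, Real.log_exp]
    push_cast
    rw [← Complex.exp_add, ← Complex.exp_add]
    ring_nf
  simp only [Complex.real_smul, expMean, Complex.ofReal_mul, Complex.ofReal_sum]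
  linear_combination (∑ k ∈ Finset.Icc 1 ⌊Real.exp t⌋₊, (f k : ℂ)) * hpow

lemma integral_indicator_expMean_sub_mul_cexp (hf : ∀ n, 0 ≤ f n)
    (hC : ∀ n : ℕ, ∑ k ∈ Finset.Icc 1 n, f k ≤ C * n) (A : ℝ) {z : ℂ} (hz : 0 < z.re) :
    ∫ t : ℝ, (((Set.Ioi 0).indicator (fun t => expMean f t - A) t : ℝ) : ℂ) *
      Complex.exp (-z * t) = LSeries (fun n => f n) (1 + z) / (1 + z) - A / z := by
  have hs0 : 1 + z ≠ 0 := fun h => by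
    have := congrArg Complex.re h
    simp only [Complex.add_re, Complex.one_re, Complex.zero_re] at this
    linarith
  have hL := LSeries_eq_mul_integral_expMean hf hC (s := 1 + z) (by simpa using hz)
  rw [add_sub_cancel_left] at hL
  have hconst : ∫ t in Set.Ioi (0 : ℝ), (A : ℂ) * Complex.exp (-z * t) = A / z := by
    rw [integral_const_mul, integral_exp_mul_complex_Ioi (by simpa using hz)]
    simp [div_eq_mul_inv]
  have hind : ∀ t : ℝ, (((Set.Ioi 0).indicator (fun t => expMean f t - A) t : ℝ) : ℂ) *
      Complex.exp (-z * t) = (Set.Ioi (0 : ℝ)).indicator (fun t : ℝ =>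
        (expMean f t : ℂ) * Complex.exp (-z * t) - A * Complex.exp (-z * t)) t := fun t => by
    by_cases ht : t ∈ Set.Ioi (0 : ℝ) <;> simp only [ht, Set.indicator_of_mem,
      Set.indicator_of_notMem, not_false_eq_true, Complex.ofReal_sub, Complex.ofReal_zero] <;> ring
  rw [integral_congr_ae (Eventually.of_forall hind), integral_indicator measurableSet_Ioi,
    integral_sub (integrableOn_expMean_mul_cexp hf hC hz)
      ((integrableOn_exp_mul_complex_Ioi (by simpa using hz) 0).const_mul _), hconst, hL,
    mul_div_cancel_left₀ _ hs0]

lemma hasLaplaceExtension_expMean_sub (hf : ∀ n, 0 ≤ f n)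
    (hC : ∀ n : ℕ, ∑ k ∈ Finset.Icc 1 n, f k ≤ C * n) {A : ℝ} {G : ℂ → ℂ}
    (hG : ContinuousOn G {s | 1 ≤ s.re})
    (hLG : ∀ s : ℂ, 1 < s.re → LSeries (fun n => f n) s = G s + A / (s - 1)) :
    HasLaplaceExtension ((Set.Ioi 0).indicator fun t => expMean f t - A)
      fun z => (G (1 + z) - A) / (1 + z) where
  measurable := ((measurable_expMean f).sub_const A).indicator measurableSet_Ioi
  bounded := by
    refine ⟨C + |A|, fun t => ?_⟩
    rw [← Real.norm_eq_abs]
    refine (norm_indicator_le_norm_self _ _).trans ?_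
    refine (norm_sub_le _ _).trans (add_le_add ?_ le_rfl)
    rw [Real.norm_of_nonneg (expMean_nonneg hf t)]
    exact expMean_le hf hC t
  eq_zero_of_nonpos t ht := Set.indicator_of_notMem (by simpa using ht) _
  continuousOn := by
    refine ((hG.comp (by fun_prop) fun z hz => by simpa using hz.out).sub
      continuousOn_const).div (by fun_prop) fun z (hz : 0 ≤ z.re) hzero => ?_
    have := congrArg Complex.re hzero
    simp only [Complex.add_re, Complex.one_re, Complex.zero_re] at this
    linarith
  integral_eq z hz := by
    have hs : 1 < (1 + z).re := by simpa using hz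
    have hz0 : z ≠ 0 := by rintro rfl; simp at hz
    have hs0 : 1 + z ≠ 0 := by intro h0; rw [h0] at hs; norm_num at hs
    rw [integral_indicator_expMean_sub_mul_cexp hf hC A hz, hLG _ hs, add_sub_cancel_left]
    field_simp
    ring

theorem tendsto_sum_div_of_LSeries (hf : ∀ n, 0 ≤ f n)
    (hC : ∀ n : ℕ, ∑ k ∈ Finset.Icc 1 n, f k ≤ C * n) {A : ℝ} {G : ℂ → ℂ}
    (hG : ContinuousOn G {s | 1 ≤ s.re})
    (hLG : ∀ s : ℂ, 1 < s.re → LSeries (fun n => f n) s = G s + A / (s - 1)) :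
    Tendsto (fun x : ℝ => (∑ k ∈ Finset.Icc 1 ⌊x⌋₊, f k) / x) atTop (𝓝 A) := by
  have hC0 := nonneg_of_sum_le hf hC
  have hlim : Tendsto ((Set.Ioi 0).indicator fun t => expMean f t - A) atTop (𝓝 0) := by
    refine (hasLaplaceExtension_expMean_sub hf hC hG hLG).tendsto_zero_of_slowlyDecreasing
      fun ε hε => ⟨ε / (C + 1), by positivity, ?_⟩
    filter_upwards [eventually_gt_atTop 0] with x hx w hw
    have hxw : x + w ∈ Set.Ioi 0 := add_pos_of_pos_of_nonneg hx hw.1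
    rw [Set.indicator_of_mem (Set.mem_Ioi.mpr hx), Set.indicator_of_mem hxw]
    have hmean := expMean_sub_le hf hC x hw.1
    have hCw : C * w ≤ ε := calc
      C * w ≤ (C + 1) * (ε / (C + 1)) :=
        mul_le_mul (by linarith) hw.2 hw.1 (by positivity)
      _ = ε := by field_simp
    linarith
  have hmean := (hlim.comp Real.tendsto_log_atTop).add_const A
  rw [zero_add] at hmean
  refine hmean.congr' ?_
  filter_upwards [eventually_gt_atTop 1] with x hx
  rw [Function.comp_apply, Set.indicator_of_mem (show Real.log x ∈ Set.Ioi 0 from Real.log_pos hx),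
    sub_add_cancel, expMean_log f (one_pos.trans hx)]

end WienerIkehara

lemma LSeries_vonMangoldt_eq : ∃ G : ℂ → ℂ, ContinuousOn G {s | 1 ≤ s.re} ∧ ∀ s : ℂ, 1 < s.re →
    LSeries (fun n => (ArithmeticFunction.vonMangoldt n : ℂ)) s = G s + 1 / (s - 1) := by
  refine ⟨ArithmeticFunction.vonMangoldt.LFunctionResidueClassAux (q := 1) 1,
    ArithmeticFunction.vonMangoldt.continuousOn_LFunctionResidueClassAux _, fun s hs => ?_⟩
  have hclass : ArithmeticFunction.vonMangoldt.residueClass (1 : ZMod 1) =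
      ArithmeticFunction.vonMangoldt := by
    ext n
    simp [ArithmeticFunction.vonMangoldt.residueClass, Set.indicator,
      Subsingleton.elim (_ : ZMod 1) 1]
  have hEqOn :=
    ArithmeticFunction.vonMangoldt.eqOn_LFunctionResidueClassAux (q := 1) (a := 1) isUnit_one
  rw [hEqOn (show s ∈ {s : ℂ | 1 < s.re} from hs), hclass]
  simp

lemma psi_eq_sum_Icc_one (x : ℝ) :
    Chebyshev.psi x = ∑ k ∈ Finset.Icc 1 ⌊x⌋₊, ArithmeticFunction.vonMangoldt k := by
  rw [Chebyshev.psi_eq_sum_Icc, ← Finset.add_sum_Ioc_eq_sum_Icc (Nat.zero_le _)]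
  simp [← Finset.Icc_add_one_left_eq_Ioc]

theorem tendsto_psi_div_self : Tendsto (fun x : ℝ => Chebyshev.psi x / x) atTop (𝓝 1) := by
  obtain ⟨G, hG, hLG⟩ := LSeries_vonMangoldt_eq
  simp only [psi_eq_sum_Icc_one]
  refine tendsto_sum_div_of_LSeries (fun _ => ArithmeticFunction.vonMangoldt_nonneg)
    (C := Real.log 4 + 4) (fun n => ?_) hG (by simpa using hLG)
  simpa [psi_eq_sum_Icc_one] using Chebyshev.psi_le_const_mul_self (x := n) (Nat.cast_nonneg n)

theorem tendsto_theta_div_self : Tendsto (fun x : ℝ => Chebyshev.theta x / x) atTop (𝓝 1) := by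
  have hsqrt : Real.sqrt =o[atTop] (fun x : ℝ => x) := by
    refine (Asymptotics.isLittleO_iff_tendsto' ?_).mpr ?_
    · filter_upwards [eventually_ne_atTop 0] with x hx h0 using absurd h0 hx
    · exact (tendsto_inv_atTop_zero.comp Real.tendsto_sqrt_atTop).congr fun x => by
        simp [Real.sqrt_div_self']
  have hdiff := (Chebyshev.isBigO_psi_sub_theta_sqrt.trans_isLittleO hsqrt).tendsto_div_nhds_zero
  refine (sub_zero (1 : ℝ) ▸ tendsto_psi_div_self.sub hdiff).congr fun x => ?_
  simp only [Pi.sub_apply]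
  ring

section WindowPrimes

/-- The primes `p` having a multiple `p * i`, `1 ≤ i ≤ K`, in the window `(N, N + d]`. For such `p`,
the Frobenius forces `p` to divide the coefficients of `X ^ k`, `k ≡ N (mod p)`, in the `(N + d)`-th
power of an integral quadratic polynomial. -/
def windowPrimes (N d K : ℕ) : Finset ℕ :=
  (Finset.Icc 1 K).biUnion fun i => (Finset.Ioc (N / i) ((N + d) / i)).filter Nat.Prime

/-- The least common multiple of `1, …, N + 2 * d`, freed of one factor `p` for each window prime
`p`; it serves as the denominator of the linear forms. -/
def reducedLcm (N d K : ℕ) : ℕ :=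
  Nat.lcmUpto (N + 2 * d) / ∏ p ∈ windowPrimes N d K, p

variable {N d K p : ℕ}

lemma mem_filter_Ioc_div {i : ℕ} (hi : 0 < i) :
    p ∈ (Finset.Ioc (N / i) ((N + d) / i)).filter Nat.Prime ↔
      p.Prime ∧ N < p * i ∧ p * i ≤ N + d := by
  rw [Finset.mem_filter, Finset.mem_Ioc, Nat.div_lt_iff_lt_mul hi, Nat.le_div_iff_mul_le hi,
    and_comm]

lemma mem_windowPrimes :
    p ∈ windowPrimes N d K ↔ p.Prime ∧ ∃ i ∈ Finset.Icc 1 K, N < p * i ∧ p * i ≤ N + d := by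
  simp only [windowPrimes, Finset.mem_biUnion]
  constructor
  · rintro ⟨i, hi, hp⟩
    obtain ⟨hprime, hip⟩ := (mem_filter_Ioc_div (Finset.mem_Icc.mp hi).1).mp hp
    exact ⟨hprime, i, hi, hip⟩
  · rintro ⟨hprime, i, hi, hip⟩
    exact ⟨i, hi, (mem_filter_Ioc_div (Finset.mem_Icc.mp hi).1).mpr ⟨hprime, hip⟩⟩

lemma prime_of_mem_windowPrimes (hp : p ∈ windowPrimes N d K) : p.Prime :=
  (mem_windowPrimes.mp hp).1

lemma lt_of_lt_mul_of_le {i : ℕ} (hK : 2 * K * d ≤ N) (hi : i ≤ K) (hN : N < p * i) :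
    2 * d < p := by
  by_contra! hp
  have : p * i ≤ 2 * d * K := Nat.mul_le_mul hp hi
  linarith

lemma lt_of_mem_windowPrimes (hK : 2 * K * d ≤ N) (hp : p ∈ windowPrimes N d K) : 2 * d < p := by
  obtain ⟨-, i, hi, hN, -⟩ := mem_windowPrimes.mp hp
  exact lt_of_lt_mul_of_le hK (Finset.mem_Icc.mp hi).2 hN

lemma pairwiseDisjoint_filter_Ioc_div (hK : 2 * K * d ≤ N) :
    (Finset.Icc 1 K : Set ℕ).PairwiseDisjoint
      fun i => (Finset.Ioc (N / i) ((N + d) / i)).filter Nat.Prime := by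
  refine fun i hi j hj hij => Finset.disjoint_left.mpr fun p hpi hpj => ?_
  wlog hlt : i < j generalizing i j
  · exact this j hj i hi hij.symm hpj hpi (hij.lt_or_gt.resolve_left hlt)
  obtain ⟨hi, hiK⟩ := Finset.mem_Icc.mp hi
  obtain ⟨-, hN, -⟩ := (mem_filter_Ioc_div hi).mp hpi
  obtain ⟨-, -, hNd⟩ := (mem_filter_Ioc_div (hi.trans hlt.le)).mp hpj
  have hp : 2 * d < p := lt_of_lt_mul_of_le hK hiK hN
  have hpij : p * (i + 1) ≤ p * j := Nat.mul_le_mul_left p hlt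
  linarith

lemma dvd_lcmUpto {m j : ℕ} (hj : 0 < j) (hjm : j ≤ m) : j ∣ Nat.lcmUpto m :=
  Finset.dvd_lcm (f := id) (Finset.mem_Icc.mpr ⟨hj, hjm⟩)

lemma prod_windowPrimes_dvd_lcmUpto (N d K : ℕ) :
    ∏ p ∈ windowPrimes N d K, p ∣ Nat.lcmUpto (N + 2 * d) := by
  refine Finset.prod_primes_dvd _ (fun p hp => (prime_of_mem_windowPrimes hp).prime) fun p hp => ?_
  obtain ⟨hprime, i, hi, -, hNd⟩ := mem_windowPrimes.mp hp
  have hpi : p ≤ p * i := Nat.le_mul_of_pos_right p (Finset.mem_Icc.mp hi).1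
  exact dvd_lcmUpto hprime.pos (by omega)

lemma reducedLcm_mul_prod (N d K : ℕ) :
    reducedLcm N d K * ∏ p ∈ windowPrimes N d K, p = Nat.lcmUpto (N + 2 * d) :=
  Nat.div_mul_cancel (prod_windowPrimes_dvd_lcmUpto N d K)

lemma reducedLcm_pos (N d K : ℕ) : 0 < reducedLcm N d K :=
  Nat.pos_of_mul_pos_right (reducedLcm_mul_prod N d K ▸ Nat.lcmUpto_pos _)

lemma natCast_dvd_mul_of_primes {S : Finset ℕ} (hS : ∀ p ∈ S, p.Prime) {j e : ℕ} {c : ℤ}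
    (hj : j ∣ e * ∏ p ∈ S, p) (hc : ∀ p ∈ S, p ∣ j → (p : ℤ) ∣ c) : (j : ℤ) ∣ e * c := by
  set Q := ∏ p ∈ S with p ∣ j, p with hQ
  set Q' := ∏ p ∈ S with ¬ p ∣ j, p with hQ'
  have hQc : (Q : ℤ) ∣ c := by
    rw [Int.natCast_dvd]
    refine Finset.prod_primes_dvd _ (fun p hp => (hS p (Finset.mem_filter.mp hp).1).prime) ?_
    exact fun p hp =>
      Int.natCast_dvd.mp (hc p (Finset.mem_filter.mp hp).1 (Finset.mem_filter.mp hp).2)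
  have hcoprime : j.Coprime Q' := Nat.Coprime.prod_right fun p hp =>
    (((hS p (Finset.mem_filter.mp hp).1).coprime_iff_not_dvd).mpr (Finset.mem_filter.mp hp).2).symm
  rw [← Finset.prod_filter_mul_prod_filter_not S (· ∣ j), ← mul_assoc] at hj
  have hjQ : (j : ℤ) ∣ e * Q := mod_cast hcoprime.dvd_of_dvd_mul_right hj
  exact hjQ.trans (mul_dvd_mul_left _ hQc)

lemma natCast_dvd_reducedLcm_mul {j : ℕ} (hj : 0 < j) (hjN : j ≤ N + 2 * d) {c : ℤ}
    (hc : ∀ p ∈ windowPrimes N d K, p ∣ j → (p : ℤ) ∣ c) : (j : ℤ) ∣ reducedLcm N d K * c :=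
  natCast_dvd_mul_of_primes (fun _ => prime_of_mem_windowPrimes)
    (reducedLcm_mul_prod N d K ▸ dvd_lcmUpto hj hjN) hc

lemma sum_log_filter_Ioc_div (N d i : ℕ) :
    ∑ p ∈ (Finset.Ioc (N / i) ((N + d) / i)).filter Nat.Prime, Real.log p =
      Chebyshev.theta ((N + d : ℕ) / i) - Chebyshev.theta (N / i) := by
  simp only [Chebyshev.theta, Nat.floor_div_eq_div]
  rw [eq_sub_iff_add_eq', Finset.sum_filter, Finset.sum_filter, Finset.sum_filter,
    Finset.sum_Ioc_consecutive _ (Nat.zero_le _) (Nat.div_le_div_right (Nat.le_add_right N d))]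

lemma log_reducedLcm (hK : 2 * K * d ≤ N) :
    Real.log (reducedLcm N d K) = Chebyshev.psi (N + 2 * d : ℕ) - ∑ i ∈ Finset.Icc 1 K,
      (Chebyshev.theta ((N + d : ℕ) / i) - Chebyshev.theta (N / i)) := by
  have hprod : ∏ p ∈ windowPrimes N d K, (p : ℝ) ≠ 0 := Finset.prod_ne_zero_iff.mpr fun p hp =>
    Nat.cast_ne_zero.mpr (prime_of_mem_windowPrimes hp).ne_zero
  rw [Chebyshev.psi_eq_log_lcmUpto, ← reducedLcm_mul_prod N d K, Nat.cast_mul, Nat.cast_prod,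
    Real.log_mul (Nat.cast_ne_zero.mpr (reducedLcm_pos N d K).ne') hprod,
    Real.log_prod (Finset.prod_ne_zero_iff.mp hprod), windowPrimes,
    Finset.sum_biUnion (pairwiseDisjoint_filter_Ioc_div hK)]
  simp only [sum_log_filter_Ioc_div, add_sub_cancel_right]

lemma tendsto_comp_mul_natCast_div {f : ℝ → ℝ} (hf : Tendsto (fun x => f x / x) atTop (𝓝 1))
    {c : ℝ} (hc : 0 < c) : Tendsto (fun n : ℕ => f (c * n) / n) atTop (𝓝 c) := by
  have hcn : Tendsto (fun n : ℕ => c * (n : ℝ)) atTop atTop :=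
    tendsto_natCast_atTop_atTop.const_mul_atTop hc
  refine ((hf.comp hcn).const_mul c).congr (fun n => ?_) |>.trans_eq (by rw [mul_one])
  simp only [Function.comp_apply]
  rw [mul_div_assoc', mul_div_mul_left _ _ hc.ne']

lemma tendsto_log_reducedLcm_div {ν δ : ℕ} (hν : 0 < ν) (hK : 2 * K * δ ≤ ν) :
    Tendsto (fun n : ℕ => Real.log (reducedLcm (ν * n) (δ * n) K) / n) atTop
      (𝓝 (ν + 2 * δ - δ * harmonic K)) := by
  have hsum : Tendsto (fun n : ℕ => ∑ i ∈ Finset.Icc 1 K,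
      (Chebyshev.theta ((ν + δ) / i * n) / n - Chebyshev.theta (ν / i * n) / n)) atTop
      (𝓝 (∑ i ∈ Finset.Icc 1 K, ((ν + δ) / i - ν / i : ℝ))) := by
    refine tendsto_finsetSum _ fun i hi => ?_
    have hi : (0 : ℝ) < i := Nat.cast_pos.mpr (Finset.mem_Icc.mp hi).1
    have : (0 : ℝ) < ν := Nat.cast_pos.mpr hν
    exact (tendsto_comp_mul_natCast_div tendsto_theta_div_self (by positivity)).sub
      (tendsto_comp_mul_natCast_div tendsto_theta_div_self (by positivity))
  have hlimit : ∑ i ∈ Finset.Icc 1 K, ((ν + δ) / i - ν / i : ℝ) = δ * harmonic K := by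
    rw [harmonic_eq_sum_Icc, Rat.cast_sum, Finset.mul_sum]
    refine Finset.sum_congr rfl fun i _ => ?_
    push_cast
    ring
  have hpsi := tendsto_comp_mul_natCast_div tendsto_psi_div_self (c := ν + 2 * δ) (by positivity)
  rw [hlimit] at hsum
  refine (hpsi.sub hsum).congr fun n => ?_
  rw [log_reducedLcm (by nlinarith), sub_div, Finset.sum_div]
  push_cast
  congr 1
  · ring_nf
  · refine Finset.sum_congr rfl fun i _ => ?_
    ring_nf

end WindowPrimes

section Coefficients

open Polynomial

/-- The polynomial `(X - a) (b - X)`, positive on `(a, b)`, whose powers are the numerators of the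
integrals `logIntegral`. -/
noncomputable def intervalPoly (a b : ℕ) : ℤ[X] := (X - C (a : ℤ)) * (C (b : ℤ) - X)

lemma natDegree_intervalPoly_le (a b : ℕ) : (intervalPoly a b).natDegree ≤ 2 := by
  unfold intervalPoly
  compute_degree

lemma natDegree_pow_le_two_mul {R : Type*} [Semiring R] {q : R[X]} (hq : q.natDegree ≤ 2) (m : ℕ) :
    (q ^ m).natDegree ≤ 2 * m :=
  natDegree_pow_le.trans (by rw [mul_comm]; gcongr)

-- Modulo `p`, `q ^ (N + d) = q ^ i (X ^ p) * q ^ r` with `r = N + d - p * i`, and no exponent of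
-- `q ^ r` is congruent to `N`.
lemma prime_dvd_coeff_pow {q : ℤ[X]} (hq : q.natDegree ≤ 2) {p N d i k : ℕ} (hp : p.Prime)
    (hd : 2 * d < p) (hN : N < p * i) (hNd : p * i ≤ N + d) (hk : (p : ℤ) ∣ k - N) :
    (p : ℤ) ∣ (q ^ (N + d)).coeff k := by
  have : Fact p.Prime := ⟨hp⟩
  obtain ⟨r, hr⟩ := Nat.exists_eq_add_of_le hNd
  set q' := q.map (Int.castRingHom (ZMod p))
  have hmap : (q ^ (N + d)).map (Int.castRingHom (ZMod p)) =
      expand (ZMod p) p (q' ^ i) * q' ^ r := by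
    rw [Polynomial.map_pow, hr, pow_add, ZMod.expand_card, ← pow_mul, mul_comm i]
  rw [← ZMod.intCast_zmod_eq_zero_iff_dvd, ← eq_intCast (Int.castRingHom (ZMod p)), ← coeff_map,
    hmap, coeff_mul]
  refine Finset.sum_eq_zero fun ⟨l, m⟩ hlm => ?_
  rw [Finset.HasAntidiagonal.mem_antidiagonal] at hlm
  dsimp only at hlm ⊢
  rw [coeff_expand hp.pos]
  split_ifs with hl
  · have hm : 2 * r < m := by
      by_contra! hm
      have hdvd : (p : ℤ) ∣ d + m - r := by
        have : (d + m - r : ℤ) = k - N - l + p * i := by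
          have hr : (N + d : ℤ) = p * i + r := mod_cast hr
          have hlm : (l + m : ℤ) = k := mod_cast hlm
          linear_combination hr + hlm
        exact this ▸ (hk.sub (mod_cast hl)).add (dvd_mul_right _ _)
      have := Int.le_of_dvd (by lia) hdvd
      lia
    rw [coeff_eq_zero_of_natDegree_lt (n := m), mul_zero]
    exact (natDegree_pow_le_two_mul (natDegree_map_le.trans hq) r).trans_lt hm
  · exact zero_mul _

lemma pow_dvd_coeff_pow {R : Type*} [CommRing R] [IsDomain R] {q r : R[X]} {c : R} (hc : c ≠ 0)
    (hr : q.comp (C c * X) = C c * r) {m k : ℕ} (hk : k ≤ m) : c ^ (m - k) ∣ (q ^ m).coeff k := by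
  refine ⟨(r ^ m).coeff k, mul_right_cancel₀ (pow_ne_zero k hc) ?_⟩
  calc (q ^ m).coeff k * c ^ k = c ^ m * (r ^ m).coeff k := by
        rw [← comp_C_mul_X_coeff, pow_comp, hr, mul_pow, ← C_pow, coeff_C_mul]
    _ = c ^ (m - k) * (r ^ m).coeff k * c ^ k := by
        rw [mul_right_comm, ← pow_add, Nat.sub_add_cancel hk]

lemma intervalPoly_comp_C_mul_X (a b : ℕ) : (intervalPoly a b).comp (C (a * b : ℤ) * X) =
    C (a * b : ℤ) * ((C (b : ℤ) * X - 1) * (1 - C (a : ℤ) * X)) := by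
  simp only [intervalPoly, mul_comp, sub_comp, X_comp, C_comp, C_mul]
  ring

lemma pow_dvd_coeff_intervalPoly_pow {a b m k : ℕ} (ha : a ≠ 0) (hb : b ≠ 0) (hk : k ≤ m) :
    (a * b : ℤ) ^ (m - k) ∣ (intervalPoly a b ^ m).coeff k :=
  pow_dvd_coeff_pow (by positivity) (intervalPoly_comp_C_mul_X a b) hk

lemma coeff_mul_pow_le_eval (r : ℕ[X]) (k x : ℕ) : r.coeff k * x ^ k ≤ r.eval x := by
  by_cases hk : k ∈ r.support
  · rw [eval_eq_sum, sum_def]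
    exact Finset.single_le_sum (f := fun k => r.coeff k * x ^ k) (fun _ _ => Nat.zero_le _) hk
  · simp [notMem_support_iff.mp hk]

lemma abs_coeff_pow_mul_pow_le {q : ℤ[X]} {r : ℕ[X]}
    (hr : q.comp (C (-1) * X) = C (-1) * r.map (Nat.castRingHom ℤ)) (m k x : ℕ) :
    |(q ^ m).coeff k| * x ^ k ≤ ((r.eval x : ℕ) : ℤ) ^ m := by
  have hcoeff : |(q ^ m).coeff k| = (r ^ m).coeff k := by
    calc |(q ^ m).coeff k| = |(q ^ m).coeff k * (-1) ^ k| := by simp [abs_mul]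
      _ = |(-1) ^ m * ((r ^ m).map (Nat.castRingHom ℤ)).coeff k| := by
        rw [← comp_C_mul_X_coeff, pow_comp, hr, mul_pow, ← C_pow, coeff_C_mul,
          Polynomial.map_pow]
      _ = (r ^ m).coeff k := by rw [coeff_map]; simp [abs_mul]
  rw [hcoeff]
  exact_mod_cast (coeff_mul_pow_le_eval (r ^ m) k x).trans_eq (eval_pow m)

lemma abs_coeff_intervalPoly_pow_mul_pow_le (a b m k x : ℕ) :
    |(intervalPoly a b ^ m).coeff k| * x ^ k ≤ ((x + a) * (x + b) : ℤ) ^ m := by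
  have hcomp : (intervalPoly a b).comp (C (-1) * X) =
      C (-1) * ((X + C a) * (X + C b) : ℕ[X]).map (Nat.castRingHom ℤ) := by
    simp only [intervalPoly, mul_comp, sub_comp, X_comp, C_comp, Polynomial.map_mul,
      Polynomial.map_add, map_X, Polynomial.map_C, Nat.coe_castRingHom, map_neg, map_one]
    ring
  simpa using abs_coeff_pow_mul_pow_le hcomp m k x

end Coefficients

section LogIntegral

open Polynomial

/-- The integrals `∫ ((t - a) (b - t)) ^ m / t ^ (N + 1)` over `[a, b]`, which are integral linear
forms in `1` and `log (b / a)` up to a denominator. -/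
noncomputable def logIntegral (a b : ℝ) (m N : ℕ) : ℝ :=
  ∫ t in a..b, ((t - a) * (b - t)) ^ m / t ^ (N + 1)

lemma zero_notMem_uIcc_of_pos {a b : ℝ} (ha : 0 < a) (hb : 0 < b) : (0 : ℝ) ∉ Set.uIcc a b :=
  fun h => (lt_min ha hb).not_ge h.1

lemma integral_aeval_div_pow_eq_sum (q : ℤ[X]) (N : ℕ) {a b : ℝ} (ha : 0 < a) (hb : 0 < b) :
    ∫ t in a..b, aeval t q / t ^ (N + 1) =
      ∑ k ∈ q.support, q.coeff k * ∫ t in a..b, t ^ ((k : ℤ) - N - 1) := by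
  simp_rw [← intervalIntegral.integral_const_mul]
  rw [← intervalIntegral.integral_finsetSum fun k _ =>
    (intervalIntegral.intervalIntegrable_zpow (Or.inr (zero_notMem_uIcc_of_pos ha hb))).const_mul _]
  refine intervalIntegral.integral_congr fun t ht => ?_
  have ht0 : t ≠ 0 := fun h => zero_notMem_uIcc_of_pos ha hb (h ▸ ht)
  simp only [aeval_def, eval₂_eq_sum, sum_def, Finset.sum_div, eq_intCast]
  refine Finset.sum_congr rfl fun k _ => ?_
  rw [mul_div_assoc, sub_sub, zpow_sub₀ ht0]
  norm_cast

lemma integral_aeval_div_pow (q : ℤ[X]) (N : ℕ) {a b : ℝ} (ha : 0 < a) (hb : 0 < b) :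
    ∫ t in a..b, aeval t q / t ^ (N + 1) = q.coeff N * Real.log (b / a) +
      ∑ k ∈ q.support.erase N,
        q.coeff k * ((b ^ ((k : ℤ) - N) - a ^ ((k : ℤ) - N)) / ((k : ℤ) - N : ℤ)) := by
  have h0 := zero_notMem_uIcc_of_pos ha hb
  have hlog : ∫ t in a..b, t ^ ((N : ℤ) - N - 1) = Real.log (b / a) := by
    simp only [sub_self, zero_sub, zpow_neg_one, integral_inv h0]
  have hzpow : ∀ k ∈ q.support.erase N, q.coeff k * ∫ t in a..b, t ^ ((k : ℤ) - N - 1) =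
      q.coeff k * ((b ^ ((k : ℤ) - N) - a ^ ((k : ℤ) - N)) / ((k : ℤ) - N : ℤ)) := fun k hk => by
    have hkN : (k : ℤ) - N - 1 ≠ -1 := by have := (Finset.mem_erase.mp hk).1; lia
    rw [integral_zpow (Or.inr ⟨hkN, h0⟩), sub_add_cancel]
    push_cast
    rw [sub_add_cancel]
  rw [integral_aeval_div_pow_eq_sum q N ha hb, ← Finset.sum_congr rfl hzpow, ← hlog]
  by_cases hN : N ∈ q.support
  · exact (Finset.add_sum_erase _ _ hN).symm
  · rw [Finset.erase_eq_of_notMem hN, notMem_support_iff.mp hN, Int.cast_zero, zero_mul, zero_add]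

lemma logIntegral_eq_integral_aeval (a b m N : ℕ) :
    logIntegral a b m N = ∫ t in (a : ℝ)..b, aeval t (intervalPoly a b ^ m) / t ^ (N + 1) := by
  simp [logIntegral, intervalPoly]

lemma mul_mul_div_mem_range_intCast {D c : ℤ} {j : ℕ} (hj : j ≠ 0) (hdvd : (j : ℤ) ∣ D * c)
    (z : ℤ) : (D * (c * (z / j)) : ℝ) ∈ (Int.castRingHom ℝ).range := by
  obtain ⟨w, hw⟩ := hdvd
  have hw : (D * c : ℝ) = j * w := mod_cast hw
  refine ⟨w * z, ?_⟩
  rw [← mul_assoc, hw, eq_intCast]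
  push_cast
  field_simp

variable {a b N d K k : ℕ}

lemma prime_dvd_coeff_intervalPoly_pow {p : ℕ} (hK : 2 * K * d ≤ N) (hp : p ∈ windowPrimes N d K)
    (hk : (p : ℤ) ∣ k - N) : (p : ℤ) ∣ (intervalPoly a b ^ (N + d)).coeff k := by
  obtain ⟨hprime, i, -, hN, hNd⟩ := mem_windowPrimes.mp hp
  exact prime_dvd_coeff_pow (natDegree_intervalPoly_le a b) hprime (lt_of_mem_windowPrimes hK hp)
    hN hNd hk

lemma dvd_reducedLcm_mul_coeff_of_gt (hK : 2 * K * d ≤ N) (hNk : N < k)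
    (hk : k ≤ 2 * (N + d)) :
    ((k - N : ℕ) : ℤ) ∣ reducedLcm N d K * (intervalPoly a b ^ (N + d)).coeff k := by
  refine natCast_dvd_reducedLcm_mul (by lia) (by lia) fun p hp hpk => ?_
  refine prime_dvd_coeff_intervalPoly_pow hK hp ?_
  rw [← Nat.cast_sub hNk.le]
  exact mod_cast hpk

lemma exists_coeff_eq_and_dvd_reducedLcm_mul_of_lt (ha : 0 < a) (hb : 0 < b) (hab : a * b ≤ 2 * d)
    (hK : 2 * K * d ≤ N) (hkN : k < N) :
    ∃ c : ℤ, (intervalPoly a b ^ (N + d)).coeff k = (a * b : ℤ) ^ (N - k) * c ∧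
      ((N - k : ℕ) : ℤ) ∣ reducedLcm N d K * c := by
  obtain ⟨c, hc⟩ := (pow_dvd_pow (a * b : ℤ) (by lia : N - k ≤ N + d - k)).trans
    (pow_dvd_coeff_intervalPoly_pow ha.ne' hb.ne' (by lia))
  refine ⟨c, hc, natCast_dvd_reducedLcm_mul (by lia) (by lia) fun p hp hpk => ?_⟩
  have hprime := Nat.prime_iff_prime_int.mp (prime_of_mem_windowPrimes hp)
  have hdvd : (p : ℤ) ∣ (a * b : ℤ) ^ (N - k) * c := by
    rw [← hc]
    refine prime_dvd_coeff_intervalPoly_pow hK hp ?_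
    rw [← dvd_neg, neg_sub, ← Nat.cast_sub hkN.le]
    exact mod_cast hpk
  refine (hprime.dvd_or_dvd hdvd).resolve_left fun h => ?_
  have hpab : p ∣ a * b := mod_cast hprime.dvd_of_dvd_pow h
  exact (lt_of_mem_windowPrimes hK hp).not_ge ((Nat.le_of_dvd (by positivity) hpab).trans hab)

lemma reducedLcm_mul_coeff_mul_mem_range_intCast (ha : 0 < a) (hb : 0 < b)
    (hab : a * b ≤ 2 * d) (hK : 2 * K * d ≤ N) (hkN : k ≠ N) (hk : k ≤ 2 * (N + d)) :
    (reducedLcm N d K * ((intervalPoly a b ^ (N + d)).coeff k *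
      (((b : ℝ) ^ ((k : ℤ) - N) - (a : ℝ) ^ ((k : ℤ) - N)) / ((k : ℤ) - N : ℤ))) : ℝ) ∈
      (Int.castRingHom ℝ).range := by
  rcases hkN.lt_or_gt with hlt | hgt
  · obtain ⟨c, hc, hdvd⟩ := exists_coeff_eq_and_dvd_reducedLcm_mul_of_lt ha hb hab hK hlt
    have hj : N - k ≠ 0 := by lia
    have hexp : (k : ℤ) - N = -((N - k : ℕ) : ℤ) := by lia
    convert mul_mul_div_mem_range_intCast hj hdvd (b ^ (N - k) - a ^ (N - k)) using 1
    rw [hc, hexp, zpow_neg, zpow_neg, zpow_natCast, zpow_natCast]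
    push_cast
    rw [mul_pow]
    field_simp
    ring
  · have hj : k - N ≠ 0 := by lia
    have hexp : (k : ℤ) - N = (k - N : ℕ) := by lia
    have hdvd := dvd_reducedLcm_mul_coeff_of_gt (a := a) (b := b) hK hgt hk
    convert mul_mul_div_mem_range_intCast hj hdvd (b ^ (k - N) - a ^ (k - N)) using 1
    rw [hexp, zpow_natCast, zpow_natCast]
    push_cast
    rfl

theorem exists_reducedLcm_mul_logIntegral_eq (ha : 0 < a) (hb : 0 < b) (hab : a * b ≤ 2 * d)
    (hK : 2 * K * d ≤ N) :
    ∃ A : ℤ, reducedLcm N d K * logIntegral a b (N + d) N =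
      (reducedLcm N d K * (intervalPoly a b ^ (N + d)).coeff N : ℤ) * Real.log (b / a) + A := by
  have hrange := sum_mem (S := (Int.castRingHom ℝ).range)
    (t := (intervalPoly a b ^ (N + d)).support.erase N) fun k hk =>
      reducedLcm_mul_coeff_mul_mem_range_intCast ha hb hab hK (Finset.mem_erase.mp hk).1
        ((le_natDegree_of_mem_supp k (Finset.mem_erase.mp hk).2).trans
          (natDegree_pow_le_two_mul (natDegree_intervalPoly_le a b) _))
  obtain ⟨A, hA⟩ := hrange
  refine ⟨A, ?_⟩
  rw [logIntegral_eq_integral_aeval, integral_aeval_div_pow _ _ (by positivity) (by positivity),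
    mul_add, Finset.mul_sum, ← hA]
  push_cast
  rw [mul_assoc]
  rfl

lemma logIntegral_integrand_nonneg {a b t : ℝ} (ha : 0 < a) (ht : t ∈ Set.Icc a b) (m N : ℕ) :
    0 ≤ ((t - a) * (b - t)) ^ m / t ^ (N + 1) :=
  div_nonneg (pow_nonneg (mul_nonneg (sub_nonneg.mpr ht.1) (sub_nonneg.mpr ht.2)) m)
    (pow_nonneg (ha.le.trans ht.1) _)

lemma intervalIntegrable_logIntegral_integrand (a b : ℝ) {c e : ℝ} (hc : 0 < c) (he : 0 < e)
    (m N : ℕ) :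
    IntervalIntegrable (fun t => ((t - a) * (b - t)) ^ m / t ^ (N + 1)) volume c e := by
  refine ContinuousOn.intervalIntegrable (ContinuousOn.div (by fun_prop) (by fun_prop) ?_)
  exact fun t ht => pow_ne_zero _ fun h => zero_notMem_uIcc_of_pos hc he (h ▸ ht)

lemma logIntegral_le {a b B : ℝ} (ha : 0 < a) (hab : a ≤ b) {μ ν : ℕ}
    (h : ∀ t ∈ Set.Icc a b, ((t - a) * (b - t)) ^ μ ≤ B * t ^ ν) (n : ℕ) :
    logIntegral a b (μ * n) (ν * n) ≤ (b - a) / a * B ^ n := by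
  have hB : 0 ≤ B := nonneg_of_mul_nonneg_left
    ((by simp : (0 : ℝ) ≤ ((a - a) * (b - a)) ^ μ).trans (h a (Set.left_mem_Icc.mpr hab)))
    (by positivity)
  have hle : ∀ t ∈ Set.Icc a b,
      ((t - a) * (b - t)) ^ (μ * n) / t ^ (ν * n + 1) ≤ B ^ n / a := fun t ht => by
    have ht0 : 0 < t := ha.trans_le ht.1
    have hnonneg := mul_nonneg (sub_nonneg.mpr ht.1) (sub_nonneg.mpr ht.2)
    rw [div_le_div_iff₀ (by positivity) ha]
    calc ((t - a) * (b - t)) ^ (μ * n) * a ≤ (B * t ^ ν) ^ n * t := by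
          rw [pow_mul]
          gcongr
          exacts [h t ht, ht.1]
      _ = B ^ n * t ^ (ν * n + 1) := by rw [mul_pow, pow_succ, pow_mul, mul_assoc]
  calc logIntegral a b (μ * n) (ν * n) ≤ ∫ _ in a..b, B ^ n / a :=
        intervalIntegral.integral_mono_on hab
          (intervalIntegrable_logIntegral_integrand a b ha (ha.trans_le hab) _ _) (by simp) hle
    _ = (b - a) / a * B ^ n := by rw [intervalIntegral.integral_const, smul_eq_mul]; ring

lemma le_logIntegral {a b c e B : ℝ} (ha : 0 < a) (hac : a ≤ c) (hce : c ≤ e) (heb : e ≤ b)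
    (hB : 0 ≤ B) {μ ν : ℕ} (h : ∀ t ∈ Set.Icc c e, B * t ^ ν ≤ ((t - a) * (b - t)) ^ μ) (n : ℕ) :
    (e - c) / b * B ^ n ≤ logIntegral a b (μ * n) (ν * n) := by
  have hc : 0 < c := ha.trans_le hac
  have hb : 0 < b := hc.trans_le (hce.trans heb)
  have hle : ∀ t ∈ Set.Icc c e,
      B ^ n / b ≤ ((t - a) * (b - t)) ^ (μ * n) / t ^ (ν * n + 1) := fun t ht => by
    have ht0 : 0 < t := hc.trans_le ht.1
    have hnonneg := mul_nonneg (sub_nonneg.mpr (hac.trans ht.1)) (sub_nonneg.mpr (ht.2.trans heb))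
    rw [div_le_div_iff₀ hb (by positivity)]
    calc B ^ n * t ^ (ν * n + 1) = (B * t ^ ν) ^ n * t := by
          rw [mul_pow, pow_succ, pow_mul, mul_assoc]
      _ ≤ ((t - a) * (b - t)) ^ (μ * n) * b := by
          rw [pow_mul]
          gcongr
          exacts [h t ht, ht.2.trans heb]
  have hint := intervalIntegrable_logIntegral_integrand a b ha hb (μ * n) (ν * n)
  calc (e - c) / b * B ^ n = ∫ _ in c..e, B ^ n / b := by
        rw [intervalIntegral.integral_const, smul_eq_mul]; ring
    _ ≤ ∫ t in c..e, ((t - a) * (b - t)) ^ (μ * n) / t ^ (ν * n + 1) :=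
        intervalIntegral.integral_mono_on hce (by simp)
          (intervalIntegrable_logIntegral_integrand a b hc (hc.trans_le hce) _ _) hle
    _ ≤ logIntegral a b (μ * n) (ν * n) :=
        intervalIntegral.integral_mono_interval hac hce heb
          ((ae_restrict_iff' measurableSet_Ioc).mpr (ae_of_all _ fun t ht =>
            logIntegral_integrand_nonneg ha (Set.Ioc_subset_Icc_self ht) _ _)) hint

end LogIntegral

section LogThreeHalves

lemma harmonic_seven : harmonic 7 = 363 / 140 := by
  norm_num [harmonic, Finset.sum_range_succ]

-- The exponential rate of the denominators is `16 - harmonic 7 = 1877 / 140`, just below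
-- `log (2e6 / 3) = 13.41005…`.
lemma lt_log_two_mul_ten_pow_six_div_three :
    (1877 / 140 : ℝ) < Real.log (2 * 10 ^ 6 / 3) := by
  have hlog : Real.log (2 * 10 ^ 6 / 3) = 7 * Real.log 2 + 6 * Real.log 5 - Real.log 3 := by
    rw [← Real.log_rpow, ← Real.log_rpow, ← Real.log_mul, ← Real.log_div] <;> norm_num
  linarith [Real.log_two_gt_d9, Real.log_three_lt_d9, Real.log_five_gt_d9]

lemma eventually_reducedLcm_le :
    ∀ᶠ n : ℕ in atTop, (reducedLcm (14 * n) n 7 : ℝ) ≤ (2 * 10 ^ 6 / 3) ^ n := by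
  have htendsto := tendsto_log_reducedLcm_div (ν := 14) (δ := 1) (K := 7) (by norm_num)
    (by norm_num)
  simp only [one_mul, harmonic_seven] at htendsto
  norm_num at htendsto
  filter_upwards [htendsto.eventually_lt_const lt_log_two_mul_ten_pow_six_div_three,
    eventually_gt_atTop 0] with n hn hn0
  have hpos : (0 : ℝ) < reducedLcm (14 * n) n 7 := Nat.cast_pos.mpr (reducedLcm_pos _ _ _)
  rw [← Real.log_le_log_iff hpos (by positivity), Real.log_pow, ← div_le_iff₀' (by positivity)]
  exact hn.le

lemma abs_coeff_intervalPoly_two_three_le (n : ℕ) :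
    |((intervalPoly 2 3 ^ (15 * n)).coeff (14 * n) : ℝ)| ≤ (2 * 10 ^ 15) ^ n := by
  have hcoeff : |((intervalPoly 2 3 ^ (15 * n)).coeff (14 * n) : ℝ)| * 2 ^ (14 * n) ≤
      20 ^ (15 * n) :=
    mod_cast abs_coeff_intervalPoly_pow_mul_pow_le 2 3 (15 * n) (14 * n) 2
  refine le_of_mul_le_mul_right (hcoeff.trans_eq ?_) (by positivity : (0 : ℝ) < 2 ^ (14 * n))
  rw [pow_mul, pow_mul, ← mul_pow]
  norm_num

-- `(t - 2) * (3 - t) / t` is at most `5 - 2 * √6 < 0.101021`, with equality at `√6`, which is close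
-- to the maximum of the quotient of the two sides.
lemma mul_sub_pow_fifteen_le {t : ℝ} (ht : t ∈ Set.Icc 2 3) :
    ((t - 2) * (3 - t)) ^ 15 ≤ 3e-15 * t ^ 14 := by
  obtain ⟨ht2, ht3⟩ := ht
  have : 0 ≤ (t - 2) * (3 - t) := mul_nonneg (by linarith) (by linarith)
  have bound {σ τ : ℝ} (hσ : 0 ≤ σ) (hmul : (t - 2) * (3 - t) ≤ σ * t) (hτ : t ≤ τ)
      (hnum : σ ^ 15 * τ ≤ 3e-15) : ((t - 2) * (3 - t)) ^ 15 ≤ 3e-15 * t ^ 14 := calc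
    ((t - 2) * (3 - t)) ^ 15 ≤ (σ * t) ^ 15 := by gcongr
    _ = σ ^ 15 * t * t ^ 14 := by ring
    _ ≤ σ ^ 15 * τ * t ^ 14 := by gcongr
    _ ≤ 3e-15 * t ^ 14 := by gcongr
  rcases le_total t 2.5 with ht | ht
  · refine bound (σ := 0.101021) (by norm_num) ?_ ht (by norm_num)
    nlinarith [sq_nonneg (t - 2.4494895)]
  · exact bound (σ := 0.1) (by norm_num) (by nlinarith) ht3 (by norm_num)

lemma le_mul_sub_pow_fifteen {t : ℝ} (ht : t ∈ Set.Icc 2.45 2.451) :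
    2.8e-15 * t ^ 14 ≤ ((t - 2) * (3 - t)) ^ 15 := by
  obtain ⟨htl, htu⟩ := ht
  have hmul : 0.2475 ≤ (t - 2) * (3 - t) := by nlinarith
  calc 2.8e-15 * t ^ 14 ≤ (2.8e-15 : ℝ) * 2.451 ^ 14 := by gcongr
    _ ≤ 0.2475 ^ 15 := by norm_num
    _ ≤ ((t - 2) * (3 - t)) ^ 15 := by gcongr

lemma logIntegral_two_three_le (n : ℕ) : logIntegral 2 3 (15 * n) (14 * n) ≤ (3e-15) ^ n := by
  refine (logIntegral_le two_pos (by norm_num) (fun t => mul_sub_pow_fifteen_le) n).trans ?_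
  exact mul_le_of_le_one_left (by positivity) (by norm_num)

lemma le_logIntegral_two_three (n : ℕ) :
    (2.8e-15) ^ n ≤ 3000 * logIntegral 2 3 (15 * n) (14 * n) := by
  have hle := le_logIntegral (a := 2) (b := 3) (c := 2.45) (e := 2.451) (B := 2.8e-15) (by norm_num)
    (by norm_num) (by norm_num) (by norm_num) (by norm_num) (fun t => le_mul_sub_pow_fifteen) n
  calc (2.8e-15 : ℝ) ^ n = 3000 * ((2.451 - 2.45) / 3 * 2.8e-15 ^ n) := by ring
    _ ≤ _ := by gcongr

lemma mul_rpow_le_one : (5 / 7 * 10 ^ 30 * (2e-9) ^ (103 / 30 : ℝ) : ℝ) ≤ 1 := by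
  rw [← pow_le_one_iff_of_nonneg (by positivity) (show 30 ≠ 0 by norm_num), mul_pow,
    ← Real.rpow_mul_natCast (by norm_num)]
  norm_num

lemma exists_linearForm_log_three_halves {n : ℕ} (hn : 3 ≤ n) :
    ∃ A : ℤ, reducedLcm (14 * n) n 7 * logIntegral 2 3 (15 * n) (14 * n) =
      (reducedLcm (14 * n) n 7 * (intervalPoly 2 3 ^ (15 * n)).coeff (14 * n) : ℤ) *
        Real.log (3 / 2) + A := by
  have h := exists_reducedLcm_mul_logIntegral_eq (a := 2) (b := 3) (N := 14 * n) (d := n) (K := 7)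
    two_pos three_pos (by lia) (by lia)
  rwa [← Nat.succ_mul] at h

theorem irrationalityMeasureLE_log_three_halves :
    IrrationalityMeasureLE (Real.log (3 / 2)) (103 / 30) := by
  have hforms : ∀ᶠ n : ℕ in atTop, ∃ A : ℤ,
      reducedLcm (14 * n) n 7 * logIntegral 2 3 (15 * n) (14 * n) =
        (reducedLcm (14 * n) n 7 * (intervalPoly 2 3 ^ (15 * n)).coeff (14 * n) : ℤ) *
          Real.log (3 / 2) + A :=
    (eventually_ge_atTop 3).mono fun n => exists_linearForm_log_three_halves
  obtain ⟨A, hA⟩ := hforms.choice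
  refine irrationalityMeasureLE_of_linearForms (s := 2e-9) (R := 5 / 7 * 10 ^ 30) (C := 3000)
    (a := fun n => -A n) (b := fun n => reducedLcm (14 * n) n 7 *
      (intervalPoly 2 3 ^ (15 * n)).coeff (14 * n)) (by norm_num) (by norm_num) (by norm_num)
    (by norm_num) mul_rpow_le_one (by norm_num) ?_
  filter_upwards [hA, eventually_reducedLcm_le] with n hn hD
  set D := reducedLcm (14 * n) n 7
  set I := logIntegral 2 3 (15 * n) (14 * n)
  have hD0 : (0 : ℝ) < D := Nat.cast_pos.mpr (reducedLcm_pos _ _ _)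
  have hIlow : (2.8e-15) ^ n ≤ 3000 * I := le_logIntegral_two_three n
  have hI0 : 0 < I :=
    pos_of_mul_pos_right ((by positivity : (0 : ℝ) < 2.8e-15 ^ n).trans_le hIlow) (by norm_num)
  rw [Int.cast_neg, sub_neg_eq_add, ← hn, abs_of_pos (mul_pos hD0 hI0)]
  refine ⟨mul_pos hD0 hI0, ?_, ?_⟩
  · calc D * I ≤ (2 * 10 ^ 6 / 3) ^ n * (3e-15) ^ n := by gcongr; exact logIntegral_two_three_le n
      _ = (2e-9) ^ n := by rw [← mul_pow]; norm_num
      _ ≤ 3000 * (2e-9) ^ n := le_mul_of_one_le_left (by positivity) (by norm_num)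
  · push_cast
    rw [abs_mul, abs_of_pos hD0]
    calc D * |((intervalPoly 2 3 ^ (15 * n)).coeff (14 * n) : ℝ)| ≤ D * (2 * 10 ^ 15) ^ n := by
          gcongr
          exact abs_coeff_intervalPoly_two_three_le n
      _ = D * ((5 / 7 * 10 ^ 30) ^ n * (2.8e-15) ^ n) := by rw [← mul_pow]; norm_num
      _ ≤ D * ((5 / 7 * 10 ^ 30) ^ n * (3000 * I)) := by gcongr
      _ = 3000 * (5 / 7 * 10 ^ 30) ^ n * (D * I) := by ring

end LogThreeHalves

theorem irrationality_measure_alpha_8_general {r : ℚ} (hr : r ≠ 0) :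
    IrrationalityMeasureLE (r * Real.log (3 / 2)) (103 / 30) :=
  irrationalityMeasureLE_log_three_halves.ratCast_mul hr

theorem irrationality_measure_alpha_8 :
    ∀ κ : ℝ, κ > 3.43507 →
      {pq : ℤ × ℕ+ |
        |Real.sqrt 25 * Real.log ((Real.sqrt 25 - 1) / (Real.sqrt 25 + 1)) -
            (pq.1 : ℝ) / ((pq.2 : ℕ) : ℝ)| <
          ((pq.2 : ℕ) : ℝ) ^ (-κ)}.Finite := by
  intro κ hκ
  have hsqrt : Real.sqrt 25 = 5 := by
    rw [show (25 : ℝ) = 5 ^ 2 by norm_num, Real.sqrt_sq (by norm_num)]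
  have hα : Real.sqrt 25 * Real.log ((Real.sqrt 25 - 1) / (Real.sqrt 25 + 1)) =
      (-5 : ℚ) * Real.log (3 / 2) := by
    rw [hsqrt, show ((5 - 1) / (5 + 1) : ℝ) = (3 / 2)⁻¹ by norm_num, Real.log_inv]
    norm_num
  rw [hα]
  exact irrationality_measure_alpha_8_general (by norm_num) κ (by norm_num at hκ ⊢; linarith)
end
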